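/- arXiv:1009.4848 — 2 statements merged into one kernel-verified Lean document; each statement's English description precedes it below -/
import Mathlib

section
/- Let 1 < p < ∞ and 0 < s ≤ 1 with sp ≤ N. Then there exists λ = λ(s, p, N) > 0 such that for all real numbers a < b and every η ∈ C_c^∞(ℝ^N) whose support is contained in the slab {x ∈ ℝ^N : a < x₁ < b}, one has ∬_{ℝ^N×ℝ^N} |η(x)−η(y)|^p / |x−y|^{N+sp} dx dy ≥ λ (b−a)^{−sp} ∫_{ℝ^N} |η(x)|^p dx. (This is the scaling-correct form of the inequality of Tartar stated in the paper.) -/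
open MeasureTheory Real Set Filter Metric

noncomputable section

abbrev Euc (N : ℕ) := EuclideanSpace ℝ (Fin N)

/-- Spatial Laplacian of `f : ℝ^N → ℝ`. -/
def lapl {N : ℕ} (f : Euc N → ℝ) (x : Euc N) : ℝ :=
  ∑ i : Fin N,
    fderiv ℝ (fun y => fderiv ℝ f y (EuclideanSpace.single i 1)) x (EuclideanSpace.single i 1)

/-- The capacity `C_{2/q,q'}` of a set `A ⊆ ℝ^N`. -/
def capQ (N : ℕ) (q : ℝ) (A : Set (Euc N)) : ℝ :=
  sInf { c : ℝ | ∃ φ : Euc N → ℝ, ContDiff ℝ (⊤ : ℕ∞) φ ∧ HasCompactSupport φ ∧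
      (∃ U : Set (Euc N), IsOpen U ∧ A ⊆ U ∧ ∀ x ∈ U, 1 ≤ φ x) ∧
      c = (∫ x, φ x ^ (q / (q - 1))) +
          ∫ x, ∫ y, |φ x - φ y| ^ (q / (q - 1)) / ‖x - y‖ ^ ((N : ℝ) + 2 / (q - 1)) }

/-- The spherical shell piece `F_n` of `F` around `x` at time `t`. -/
def shell (N : ℕ) (F : Set (Euc N)) (x : Euc N) (t : ℝ) (n : ℕ) : Set (Euc N) :=
  {y | y ∈ F ∧ Real.sqrt ((n : ℝ) * t) ≤ dist x y ∧ dist x y ≤ Real.sqrt (((n : ℝ) + 1) * t)}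

/-- The parabolic capacitary potential `W_F`. -/
def Wpot (N : ℕ) (q : ℝ) (F : Set (Euc N)) (x : Euc N) (t : ℝ) : ℝ :=
  t ^ (-(N : ℝ) / 2) *
    ∑' n : ℕ,
      Real.sqrt (((n : ℝ) + 1) * t) ^ ((N : ℝ) - 2 / (q - 1)) * Real.exp (-(n : ℝ) / 4) *
        capQ N q ((fun y => (Real.sqrt (((n : ℝ) + 1) * t))⁻¹ • y) '' shell N F x t n)

/-- `u` is a positive solution of `∂ₜu - Δu + u^q = 0` in `Q_∞` whose initial
trace vanishes outside the closed set `F`. -/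
def IsSol (N : ℕ) (q : ℝ) (u : Euc N → ℝ → ℝ) (F : Set (Euc N)) : Prop :=
  ContDiffOn ℝ 2 (fun p : Euc N × ℝ => u p.1 p.2) (Set.univ ×ˢ Set.Ioi (0 : ℝ)) ∧
  (∀ x t, 0 < t → 0 < u x t) ∧
  (∀ x t, 0 < t → deriv (u x) t - lapl (fun y => u y t) x + u x t ^ q = 0) ∧
  (∀ E : Set (Euc N), IsCompact E → E ⊆ Fᶜ →
    Tendsto (fun t => sSup ((fun x => u x t) '' E)) (nhdsWithin 0 (Set.Ioi 0)) (nhds 0))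

/-- The heat potential of a function. -/
def heatPot (N : ℕ) (η : Euc N → ℝ) (x : Euc N) (t : ℝ) : ℝ :=
  ∫ y, (4 * π * t) ^ (-(N : ℝ) / 2) * Real.exp (-‖x - y‖ ^ 2 / (4 * t)) * η y

/-- The heat potential of a measure. -/
def heatPotM (N : ℕ) (μ : Measure (Euc N)) (x : Euc N) (t : ℝ) : ℝ :=
  ∫ y, (4 * π * t) ^ (-(N : ℝ) / 2) * Real.exp (-‖x - y‖ ^ 2 / (4 * t)) ∂μ

/-- The class `𝒯_{r,ρ}(K)` of test functions. -/
def TestFun (N : ℕ) (r ρ : ℝ) (K : Set (Euc N)) (η : Euc N → ℝ) : Prop :=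
  ContDiff ℝ (⊤ : ℕ∞) η ∧ HasCompactSupport η ∧ tsupport η ⊆ Metric.ball (0 : Euc N) (r + ρ) ∧
  (∀ x, 0 ≤ η x ∧ η x ≤ 1) ∧ (∀ x ∈ K, η x = 1)

/-- `‖R[η]‖_{L^{q'}}^{q'} = ∬_{Q_∞} (|∇ℍ[η]|² + |∂ₜℍ[η]|)^{q'} dx dt`. -/
def Rnorm (N : ℕ) (q : ℝ) (η : Euc N → ℝ) : ℝ :=
  ∫ t in Set.Ioi (0 : ℝ), ∫ x,
    (‖fderiv ℝ (fun y => heatPot N η y t) x‖ ^ 2 +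
      |deriv (fun τ => heatPot N η x τ) t|) ^ (q / (q - 1))

/-!
Write `L = b - a` and `q = N + s p`. Moving the support of `η` by a vector `z` with `L < z₁` pushes
it out of the slab. So for `z` in a set `B` of measure `c L ^ N` with `‖z‖ ≤ ρ L` on `B`, the
numerator at the pair `(y + z, y)` is `|η y| ^ p`, and these pairs alone contribute at least
`c ρ ^ (-q) L ^ (-s p) ∫ |η| ^ p`. The pairs are counted by comparing the inner integral, pointwise
off the support of `η`, with the convolution of `|η| ^ p` and a multiple of the indicator of `B`.

The double integral is an iterated Bochner integral, and this is what costs work: the inner integral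
diverges, hence is `0` by convention, at some points when `s = 1`, and the outer one would be `0`
if the inner one were not integrable in `x`. The inner integral decays like `‖x‖ ^ (-q)`, so it must
be shown to be bounded. Where `∇η ≠ 0` and `s ≥ 1` it is `0`, the kernel being at least
`c ‖x - y‖ ^ (-N)` in a cone with vertex `x`; everywhere else a first or second order Taylor
estimate bounds it uniformly in `x`.
-/

open scoped Topology Pointwise
open Module (finrank finrank_pos)
open Function (support uncurry)

section Kernel

variable {E : Type*} [NormedAddCommGroup E] {p q δ : ℝ} {η : E → ℝ} {x : E}

/-- The integrand of the Gagliardo seminorm `Ḃ^{s,p}`, with a free exponent `q` in place of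
`N + s p` so that it makes sense without reference to a dimension. -/
def gagliardoKernel (p q : ℝ) (η : E → ℝ) (x y : E) : ℝ :=
  |η x - η y| ^ p / ‖x - y‖ ^ q

lemma gagliardoKernel_nonneg (p q : ℝ) (η : E → ℝ) (x y : E) : 0 ≤ gagliardoKernel p q η x y := by
  unfold gagliardoKernel
  positivity

lemma gagliardoKernel_le_of_le_norm_sub (hp : 0 < p) (hq : 0 ≤ q) (hδ : 0 < δ)
    (h : ∀ z ∈ support η, δ ≤ ‖x - z‖) (y : E) :
    gagliardoKernel p q η x y ≤ |η y| ^ p * δ ^ (-q) := by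
  have hx : η x = 0 := by
    by_contra hx
    simpa using hδ.trans_le (h x hx)
  rw [gagliardoKernel, hx, zero_sub, abs_neg, rpow_neg hδ.le, ← div_eq_mul_inv]
  rcases eq_or_ne (η y) 0 with hy | hy
  · simp [hy, zero_rpow hp.ne']
  · have := h y hy
    gcongr

lemma abs_rpow_mul_indicator_le_gagliardoKernel (hp : 0 < p) (hq : 0 ≤ q) (hx : η x = 0)
    {B : Set E} {ρ : ℝ} (hBρ : ∀ z ∈ B, ‖z‖ ≤ ρ) (y : E) :
    |η y| ^ p * B.indicator (fun _ => ρ ^ (-q)) (x - y) ≤ gagliardoKernel p q η x y := by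
  have hK := gagliardoKernel_nonneg p q η x y
  by_cases hy : η y = 0
  · simpa [hy, zero_rpow hp.ne'] using hK
  by_cases hB : x - y ∈ B
  · have hpos : 0 < ‖x - y‖ := norm_sub_pos_iff.2 fun hxy => hy (hxy ▸ hx)
    have hle := hBρ _ hB
    rw [indicator_of_mem hB, rpow_neg (hpos.le.trans hle), ← div_eq_mul_inv, gagliardoKernel, hx,
      zero_sub, abs_neg]
    gcongr
  · simpa [indicator_of_notMem hB] using hK

lemma measurable_uncurry_gagliardoKernel [MeasurableSpace E] [BorelSpace E]
    [SecondCountableTopology E] (hη : Measurable η) :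
    Measurable (uncurry (gagliardoKernel p q η)) := by
  unfold uncurry gagliardoKernel
  fun_prop

end Kernel

section Density

variable {E : Type*} [NormedAddCommGroup E] [MeasurableSpace E] {μ : Measure E}
  {p q δ : ℝ} {η : E → ℝ} {x : E}

/-- The inner integral of the Gagliardo seminorm as a function of the outer variable. Being a
Bochner integral, it is `0` at the points where the integral diverges. -/
def gagliardoDensity (μ : Measure E) (p q : ℝ) (η : E → ℝ) (x : E) : ℝ :=
  ∫ y, gagliardoKernel p q η x y ∂μ

lemma gagliardoDensity_nonneg (μ : Measure E) (p q : ℝ) (η : E → ℝ) (x : E) :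
    0 ≤ gagliardoDensity μ p q η x :=
  integral_nonneg (gagliardoKernel_nonneg p q η x)

lemma gagliardoDensity_le_of_le_norm_sub (hp : 0 < p) (hq : 0 ≤ q) (hδ : 0 < δ)
    (hint : Integrable (fun y => |η y| ^ p) μ) (h : ∀ z ∈ support η, δ ≤ ‖x - z‖) :
    gagliardoDensity μ p q η x ≤ (∫ y, |η y| ^ p ∂μ) * δ ^ (-q) := by
  rw [← integral_mul_const]
  exact integral_mono_of_nonneg (ae_of_all _ (gagliardoKernel_nonneg p q η x))
    (hint.mul_const _) (ae_of_all _ (gagliardoKernel_le_of_le_norm_sub hp hq hδ h))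

variable [BorelSpace E] [SecondCountableTopology E]

lemma integrable_gagliardoKernel_of_notMem_tsupport (hp : 0 < p) (hq : 0 ≤ q) (hη : Measurable η)
    (hint : Integrable (fun y => |η y| ^ p) μ) (hx : x ∉ tsupport η) :
    Integrable (gagliardoKernel p q η x) μ := by
  obtain ⟨δ, hδ, hball⟩ := Metric.isOpen_iff.1 (isClosed_tsupport η).isOpen_compl x hx
  have hsep : ∀ z ∈ support η, δ ≤ ‖x - z‖ := fun z hz => by
    by_contra! hlt
    rw [← dist_eq_norm, dist_comm] at hlt
    exact hball hlt (subset_tsupport η hz)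
  refine (hint.mul_const (δ ^ (-q))).mono'
    (measurable_uncurry_gagliardoKernel hη).of_uncurry_left.aestronglyMeasurable
    (ae_of_all _ fun y => ?_)
  rw [norm_of_nonneg (gagliardoKernel_nonneg p q η x y)]
  exact gagliardoKernel_le_of_le_norm_sub hp hq hδ hsep y

lemma stronglyMeasurable_gagliardoDensity [SFinite μ] (hη : Measurable η) :
    StronglyMeasurable (gagliardoDensity μ p q η) :=
  (measurable_uncurry_gagliardoKernel hη).stronglyMeasurable.integral_prod_right

end Density

lemma integrable_abs_rpow_of_hasCompactSupport {X : Type*} [TopologicalSpace X]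
    [MeasurableSpace X] [OpensMeasurableSpace X] {μ : Measure X} [IsFiniteMeasureOnCompacts μ]
    {p : ℝ} (hp : 0 < p) {η : X → ℝ} (hη : Continuous η) (hc : HasCompactSupport η) :
    Integrable (fun y => |η y| ^ p) μ :=
  (hη.abs.rpow_const fun _ => Or.inr hp.le).integrable_of_hasCompactSupport
    (hc.comp_left (g := fun t : ℝ => |t| ^ p) (by simp [zero_rpow hp.ne']))

section ProperSpace

variable {E : Type*} [NormedAddCommGroup E] [ProperSpace E] [MeasurableSpace E] [BorelSpace E]
  {μ : Measure E} {p q : ℝ} {η : E → ℝ}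

lemma gagliardoDensity_isBigO_cocompact [IsFiniteMeasureOnCompacts μ] (hp : 0 < p) (hq : 0 ≤ q)
    (hη : Continuous η) (hc : HasCompactSupport η) :
    gagliardoDensity μ p q η =O[cocompact E] fun x => (1 + ‖x‖) ^ (-q) := by
  obtain ⟨R, hR⟩ := hc.isBounded.exists_norm_le
  refine Asymptotics.IsBigO.of_bound ((∫ y, |η y| ^ p ∂μ) * 4⁻¹ ^ (-q)) ?_
  filter_upwards [tendsto_norm_cocompact_atTop.eventually_ge_atTop (2 * R + 1)] with x hx
  have hsep : ∀ z ∈ support η, (1 + ‖x‖) * 4⁻¹ ≤ ‖x - z‖ := fun z hz => by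
    linarith [hR z (subset_tsupport η hz), norm_nonneg z, norm_sub_norm_le x z]
  have hx1 : 0 ≤ 1 + ‖x‖ := by positivity
  rw [norm_of_nonneg (gagliardoDensity_nonneg μ p q η x), norm_of_nonneg (by positivity)]
  calc gagliardoDensity μ p q η x
      ≤ (∫ y, |η y| ^ p ∂μ) * ((1 + ‖x‖) * 4⁻¹) ^ (-q) :=
        gagliardoDensity_le_of_le_norm_sub hp hq (by positivity)
          (integrable_abs_rpow_of_hasCompactSupport hp hη hc) hsep
    _ = (∫ y, |η y| ^ p ∂μ) * 4⁻¹ ^ (-q) * (1 + ‖x‖) ^ (-q) := by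
        rw [mul_rpow hx1 (by norm_num)]
        ring

lemma integral_abs_rpow_mul_indicator_le_gagliardoDensity [IsFiniteMeasureOnCompacts μ]
    (hp : 0 < p) (hq : 0 ≤ q) (hη : Continuous η) (hc : HasCompactSupport η)
    {B : Set E} {ρ : ℝ} (hBρ : ∀ z ∈ B, ‖z‖ ≤ ρ)
    (hBη : ∀ z ∈ B, ∀ y ∈ support η, y + z ∉ tsupport η) (x : E) :
    ∫ y, |η y| ^ p * B.indicator (fun _ => ρ ^ (-q)) (x - y) ∂μ ≤ gagliardoDensity μ p q η x := by
  by_cases hx : x ∈ tsupport η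
  · have hzero : ∀ y, |η y| ^ p * B.indicator (fun _ => ρ ^ (-q)) (x - y) = 0 := fun y => by
      by_cases hy : η y = 0
      · simp [hy, zero_rpow hp.ne']
      · have hxy : x - y ∉ B := fun hxy => hBη _ hxy y hy (by simpa using hx)
        rw [indicator_of_notMem hxy, mul_zero]
    simpa only [hzero, integral_zero] using gagliardoDensity_nonneg μ p q η x
  · have hηx : η x = 0 := image_eq_zero_of_notMem_tsupport hx
    refine integral_mono_of_nonneg (ae_of_all _ fun y => ?_)
      (integrable_gagliardoKernel_of_notMem_tsupport hp hq hη.measurable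
        (integrable_abs_rpow_of_hasCompactSupport hp hη hc) hx)
      (ae_of_all _ (abs_rpow_mul_indicator_le_gagliardoKernel hp hq hηx hBρ))
    have hind : 0 ≤ B.indicator (fun _ => ρ ^ (-q)) (x - y) :=
      indicator_apply_nonneg fun hB => rpow_nonneg ((norm_nonneg _).trans (hBρ _ hB)) _
    exact mul_nonneg (by positivity) hind

lemma mul_integral_le_integral_gagliardoDensity [μ.IsAddHaarMeasure] (hp : 0 < p) (hq : 0 ≤ q)
    (hη : Continuous η) (hc : HasCompactSupport η) (hint : Integrable (gagliardoDensity μ p q η) μ)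
    {B : Set E} (hB : MeasurableSet B) {ρ : ℝ} (hBρ : ∀ z ∈ B, ‖z‖ ≤ ρ)
    (hBη : ∀ z ∈ B, ∀ y ∈ support η, y + z ∉ tsupport η) :
    ρ ^ (-q) * μ.real B * ∫ x, |η x| ^ p ∂μ ≤ ∫ x, gagliardoDensity μ p q η x ∂μ := by
  have hηp : Integrable (fun y => |η y| ^ p) μ := integrable_abs_rpow_of_hasCompactSupport hp hη hc
  have hBfin : μ B < ⊤ := (isBounded_iff_forall_norm_le.2 ⟨ρ, hBρ⟩).measure_lt_top
  have hχ : Integrable (B.indicator fun _ => ρ ^ (-q)) μ :=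
    (integrable_indicator_iff hB).2 (integrableOn_const hBfin.ne)
  calc ρ ^ (-q) * μ.real B * ∫ x, |η x| ^ p ∂μ
      = (∫ y, |η y| ^ p ∂μ) * ∫ z, B.indicator (fun _ => ρ ^ (-q)) z ∂μ := by
        rw [integral_indicator hB, setIntegral_const, smul_eq_mul]
        ring
    _ = ∫ x, ∫ y, |η y| ^ p * B.indicator (fun _ => ρ ^ (-q)) (x - y) ∂μ ∂μ :=
        (integral_convolution (ContinuousLinearMap.mul ℝ ℝ) hηp hχ).symm
    _ ≤ ∫ x, gagliardoDensity μ p q η x ∂μ :=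
        integral_mono (hηp.integrable_convolution (ContinuousLinearMap.mul ℝ ℝ) hχ) hint
          (integral_abs_rpow_mul_indicator_le_gagliardoDensity hp hq hη hc hBρ hBη)

end ProperSpace

section Calculus

variable {E : Type*} [NormedAddCommGroup E] [NormedSpace ℝ E] {η : E → ℝ} {x : E}

lemma exists_ball_eventually_mul_le_sub {D : E →L[ℝ] ℝ} (hD : HasFDerivAt η D x) {v : E} {m : ℝ}
    (hm : m < D v) :
    ∃ ρ > 0, ∀ᶠ t : ℝ in 𝓝[>] 0, ∀ u ∈ ball v ρ, t * m ≤ η (x + t • u) - η x := by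
  have hfst : Tendsto Prod.fst (𝓝[>] (0 : ℝ) ×ˢ 𝓝 v) (𝓝 0) :=
    tendsto_fst.mono_right nhdsWithin_le_nhds
  have hpos : ∀ᶠ z : ℝ × E in 𝓝[>] (0 : ℝ) ×ˢ 𝓝 v, 0 < z.1 :=
    tendsto_fst.eventually self_mem_nhdsWithin
  have hquot : Tendsto (fun z : ℝ × E => z.1⁻¹ • (η (x + z.1 • z.2) - η x))
      (𝓝[>] (0 : ℝ) ×ˢ 𝓝 v) (𝓝 (D v)) := by
    refine (hasFDerivWithinAt_univ.2 hD).lim (by simpa using hfst.smul tendsto_snd)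
      (.of_forall fun _ => mem_univ _) (tendsto_snd.congr' ?_)
    filter_upwards [hpos] with z hz
    rw [inv_smul_smul₀ hz.ne']
  have hev : ∀ᶠ z : ℝ × E in 𝓝[>] (0 : ℝ) ×ˢ 𝓝 v, z.1 * m ≤ η (x + z.1 • z.2) - η x := by
    filter_upwards [hquot.eventually_const_le hm, hpos] with z hz hz0
    rwa [smul_eq_mul, ← div_eq_inv_mul, le_div_iff₀' hz0] at hz
  obtain ⟨T, hT, V, hV, hTV⟩ := eventually_prod_iff.1 hev
  obtain ⟨ρ, hρ, hball⟩ := Metric.eventually_nhds_iff_ball.1 hV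
  exact ⟨ρ, hρ, hT.mono fun t ht u hu => hTV ht (hball u hu)⟩

lemma abs_sub_le_of_fderiv_eq_zero (hη : Differentiable ℝ η) {C : NNReal}
    (hC : LipschitzWith C (fderiv ℝ η)) (hx : fderiv ℝ η x = 0) (y : E) :
    |η x - η y| ≤ C * ‖x - y‖ ^ 2 := by
  have hderiv : ∀ z ∈ closedBall x ‖x - y‖, ‖fderiv ℝ η z‖ ≤ C * ‖x - y‖ := fun z hz => by
    have hz' : dist z x ≤ ‖x - y‖ := hz
    calc ‖fderiv ℝ η z‖ = dist (fderiv ℝ η z) (fderiv ℝ η x) := by rw [hx, dist_zero_right]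
      _ ≤ C * dist z x := hC.dist_le_mul z x
      _ ≤ C * ‖x - y‖ := by gcongr
  calc |η x - η y| ≤ C * ‖x - y‖ * ‖x - y‖ :=
        (convex_closedBall x ‖x - y‖).norm_image_sub_le_of_norm_fderiv_le (𝕜 := ℝ)
          (fun z _ => hη z) hderiv (by simp [dist_eq_norm, norm_sub_rev]) (by simp)
    _ = C * ‖x - y‖ ^ 2 := by ring

end Calculus

section Haar

variable {E : Type*} [NormedAddCommGroup E] [NormedSpace ℝ E] [FiniteDimensional ℝ E]
  [MeasurableSpace E] [BorelSpace E] {μ : Measure E} [μ.IsAddHaarMeasure]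
  {p q : ℝ} {η : E → ℝ} {x : E}

lemma tendsto_measure_ball_mul_zero [Nontrivial E] (x v : E) (ρ : ℝ) :
    Tendsto (fun t : ℝ => μ (ball (x + t • v) (t * ρ))) (𝓝[>] 0) (𝓝 0) := by
  have hpow : Tendsto (fun t : ℝ => ENNReal.ofReal (t ^ finrank ℝ E)) (𝓝[>] 0) (𝓝 0) := by
    have hcont : Continuous fun t : ℝ => ENNReal.ofReal (t ^ finrank ℝ E) :=
      ENNReal.continuous_ofReal.comp (continuous_pow _)
    simpa [(finrank_pos (R := ℝ) (M := E)).ne'] using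
      (hcont.tendsto 0).mono_left (nhdsWithin_le_nhds (s := Ioi 0))
  have hlim := ENNReal.Tendsto.mul_const hpow (b := μ (ball 0 ρ)) (Or.inr measure_ball_lt_top.ne)
  rw [zero_mul] at hlim
  refine hlim.congr' ?_
  filter_upwards [self_mem_nhdsWithin] with t ht
  exact (Measure.addHaar_ball_mul μ _ (le_of_lt ht) ρ).symm

-- The integral of `f` over each of the balls `x + t • ball v ρ` is at least `c * μ (ball 0 ρ)`,
-- although their measures tend to `0`.
lemma not_integrable_of_div_pow_finrank_le_on_cone [Nontrivial E] {f : E → ℝ} {v : E} {ρ c : ℝ}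
    (hρ : 0 < ρ) (hc : 0 < c)
    (h : ∀ᶠ t : ℝ in 𝓝[>] 0, ∀ u ∈ ball v ρ, c / t ^ finrank ℝ E ≤ f (x + t • u)) :
    ¬ Integrable f μ := by
  intro hf
  have hlim := hf.tendsto_setIntegral_nhds_zero (tendsto_measure_ball_mul_zero (μ := μ) x v ρ)
  have hlow : ∀ᶠ t : ℝ in 𝓝[>] 0,
      c * μ.real (ball 0 ρ) ≤ ∫ y in ball (x + t • v) (t * ρ), f y ∂μ := by
    filter_upwards [h, self_mem_nhdsWithin] with t hle (ht : 0 < t)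
    have hle' : ∀ y ∈ ball (x + t • v) (t * ρ), c / t ^ finrank ℝ E ≤ f y := fun y hy => by
      have hu : t⁻¹ • (y - x) ∈ ball v ρ := by
        have hrescale : t⁻¹ • (y - x) - v = t⁻¹ • (y - (x + t • v)) := by
          rw [← sub_sub, smul_sub _ _ (t • v), inv_smul_smul₀ ht.ne']
        rw [mem_ball, dist_eq_norm] at hy ⊢
        rwa [hrescale, norm_smul, norm_inv, norm_of_nonneg ht.le, ← div_eq_inv_mul,
          div_lt_iff₀' ht]
      simpa [smul_inv_smul₀ ht.ne'] using hle _ hu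
    calc c * μ.real (ball 0 ρ)
        = c / t ^ finrank ℝ E * μ.real (ball (x + t • v) (t * ρ)) := by
          rw [Measure.real, Measure.real, Measure.addHaar_ball_mul μ _ ht.le, ENNReal.toReal_mul,
            ENNReal.toReal_ofReal (by positivity)]
          field_simp
      _ = ∫ _ in ball (x + t • v) (t * ρ), c / t ^ finrank ℝ E ∂μ := by
          rw [setIntegral_const, smul_eq_mul, mul_comm]
      _ ≤ ∫ y in ball (x + t • v) (t * ρ), f y ∂μ :=
          setIntegral_mono_on (integrableOn_const measure_ball_lt_top.ne) hf.integrableOn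
            measurableSet_ball hle'
  have hball : 0 < μ.real (ball 0 ρ) :=
    ENNReal.toReal_pos (measure_ball_pos μ 0 hρ).ne' measure_ball_lt_top.ne
  exact (mul_pos hc hball).not_ge (ge_of_tendsto hlim hlow)

lemma not_integrable_gagliardoKernel_of_hasFDerivAt (hp : 0 ≤ p) (hq : finrank ℝ E + p ≤ q)
    {D : E →L[ℝ] ℝ} (hD : HasFDerivAt η D x) (hD0 : D ≠ 0) :
    ¬ Integrable (gagliardoKernel p q η x) μ := by
  obtain ⟨v, hv : D v = 2⟩ :=
    LinearMap.surjective_of_ne_zero (ContinuousLinearMap.coe_injective.ne hD0) 2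
  have : Nontrivial E := ⟨v, 0, fun h => by simp [h] at hv⟩
  have hq0 : 0 ≤ q := le_trans (by positivity) hq
  obtain ⟨ρ, hρ, hincr⟩ := exists_ball_eventually_mul_le_sub hD (v := v) (m := 1) (by simp [hv])
  set B : ℝ := ‖v‖ + ρ
  have hB : 0 < B := by positivity
  refine not_integrable_of_div_pow_finrank_le_on_cone (x := x) (v := v) (c := 1 / B ^ q) hρ
    (by positivity) ?_
  filter_upwards [hincr, Ioo_mem_nhdsGT one_pos] with t hincr ⟨ht0, ht1⟩ u hu
  have hnum : t ≤ |η x - η (x + t • u)| := by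
    rw [abs_sub_comm]
    exact (mul_one t).ge.trans ((hincr u hu).trans (le_abs_self _))
  have hden : ‖x - (x + t • u)‖ ≤ t * B := by
    rw [sub_add_cancel_left, norm_neg, norm_smul, norm_of_nonneg ht0.le]
    gcongr
    exact (norm_lt_of_mem_ball hu).le
  have hpos : 0 < ‖x - (x + t • u)‖ := norm_sub_pos_iff.2 fun hxu => by
    rw [← hxu, sub_self, abs_zero] at hnum
    exact ht0.not_ge hnum
  calc 1 / B ^ q / t ^ finrank ℝ E = 1 / B ^ q * t ^ (-(finrank ℝ E : ℝ)) := by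
        rw [rpow_neg ht0.le, rpow_natCast, div_eq_mul_inv _ (t ^ _)]
    _ ≤ 1 / B ^ q * t ^ (p - q) := by
        gcongr ?_ * ?_
        exact rpow_le_rpow_of_exponent_ge ht0 ht1.le (by linarith)
    _ = t ^ p / (t * B) ^ q := by
        rw [mul_rpow ht0.le hB.le, rpow_sub ht0]
        field_simp
    _ ≤ gagliardoKernel p q η x (x + t • u) := by
        unfold gagliardoKernel
        gcongr

lemma integrable_ite_norm_rpow [Nontrivial E] {γ δ : ℝ} (hγ : -(finrank ℝ E : ℝ) < γ)
    (hδ : δ < -(finrank ℝ E : ℝ)) (A B : ℝ) :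
    Integrable (fun x : E => if ‖x‖ ≤ 1 then A * ‖x‖ ^ γ else B * ‖x‖ ^ δ) μ := by
  refine (integrable_fun_norm_addHaar μ
    (f := fun r : ℝ => if r ≤ 1 then A * r ^ γ else B * r ^ δ)).2 ?_
  have hradial : ∀ {r : ℝ} (c κ : ℝ), 0 < r →
      c * r ^ (finrank ℝ E - 1 + κ) = r ^ (finrank ℝ E - 1) • (c * r ^ κ) := fun c κ hr => by
    rw [rpow_add hr, ← Nat.cast_pred finrank_pos, rpow_natCast, smul_eq_mul]
    ring
  rw [← Ioc_union_Ioi_eq_Ioi (zero_le_one' ℝ)]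
  refine IntegrableOn.union ?_ ?_
  · have hnear : IntegrableOn (fun r : ℝ => A * r ^ (finrank ℝ E - 1 + γ)) (Ioc 0 1) := by
      rw [← intervalIntegrable_iff_integrableOn_Ioc_of_le zero_le_one]
      exact (intervalIntegral.intervalIntegrable_rpow' (by linarith)).const_mul A
    refine hnear.congr_fun (fun r hr => ?_) measurableSet_Ioc
    simp only [if_pos hr.2, hradial A γ hr.1]
  · have hfar : IntegrableOn (fun r : ℝ => B * r ^ (finrank ℝ E - 1 + δ)) (Ioi 1) :=
      (integrableOn_Ioi_rpow_of_lt (by linarith) one_pos).const_mul B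
    refine hfar.congr_fun (fun r (hr : 1 < r) => ?_) measurableSet_Ioi
    simp only [if_neg hr.not_ge, hradial B δ (one_pos.trans hr)]

lemma exists_gagliardoDensity_le_of_modulus [Nontrivial E] (μ : Measure E) [μ.IsAddHaarMeasure]
    {θ C : ℝ} (hp : 0 < p) (hC : 0 ≤ C) (hq : finrank ℝ E < q) (hqθ : q < finrank ℝ E + θ * p)
    (M : ℝ) :
    ∃ K, ∀ (η : E → ℝ) (x : E), (∀ y, |η x - η y| ≤ C * ‖x - y‖ ^ θ) →
      (∀ y, |η x - η y| ≤ M) → gagliardoDensity μ p q η x ≤ K := by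
  have hint := integrable_ite_norm_rpow (μ := μ) (γ := θ * p - q) (δ := -q) (by linarith)
    (by linarith) (C ^ p) (M ^ p)
  refine ⟨∫ z : E, if ‖z‖ ≤ 1 then C ^ p * ‖z‖ ^ (θ * p - q) else M ^ p * ‖z‖ ^ (-q) ∂μ,
    fun η x hθ hM => ?_⟩
  rw [gagliardoDensity, ← integral_sub_left_eq_self _ μ x]
  refine integral_mono_of_nonneg (ae_of_all _ fun z => gagliardoKernel_nonneg p q η x (x - z)) hint
    (ae_of_all _ fun z => ?_)
  have hθ := hθ (x - z)
  have hM := hM (x - z)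
  simp only [gagliardoKernel, sub_sub_cancel] at hθ ⊢
  rcases eq_or_ne z 0 with rfl | hz
  · simp only [sub_zero, sub_self, abs_zero, norm_zero, zero_le_one, if_true, zero_rpow hp.ne',
      zero_div]
    positivity
  have hz : 0 < ‖z‖ := norm_pos_iff.2 hz
  split_ifs
  · calc |η x - η (x - z)| ^ p / ‖z‖ ^ q ≤ (C * ‖z‖ ^ θ) ^ p / ‖z‖ ^ q := by gcongr
      _ = C ^ p * ‖z‖ ^ (θ * p - q) := by
        rw [mul_rpow hC (by positivity), ← rpow_mul hz.le, mul_div_assoc, ← rpow_sub hz]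
  · calc |η x - η (x - z)| ^ p / ‖z‖ ^ q ≤ M ^ p / ‖z‖ ^ q := by gcongr
      _ = M ^ p * ‖z‖ ^ (-q) := by rw [rpow_neg hz.le, div_eq_mul_inv]

lemma bddAbove_range_gagliardoDensity [Nontrivial E] (hp : 0 < p) (hq : finrank ℝ E < q)
    (hq2 : q < finrank ℝ E + 2 * p) (hη : ContDiff ℝ 2 η) (hc : HasCompactSupport η) :
    BddAbove (range (gagliardoDensity μ p q η)) := by
  obtain ⟨M, hM⟩ := hη.continuous.bounded_above_of_compact_support hc
  have hosc : ∀ x y, |η x - η y| ≤ M + M := fun x y =>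
    (norm_sub_le (η x) (η y)).trans (add_le_add (hM x) (hM y))
  rcases lt_or_ge q (finrank ℝ E + p) with hqp | hqp
  · obtain ⟨C, hC⟩ := hη.lipschitzWith_of_hasCompactSupport hc (by simp)
    obtain ⟨K, hK⟩ := exists_gagliardoDensity_le_of_modulus (θ := 1) μ hp C.2 hq (by linarith)
      (M + M)
    refine ⟨K, forall_mem_range.2 fun x => hK η x (fun y => ?_) (hosc x)⟩
    simpa [dist_eq_norm] using hC.dist_le_mul x y
  · have hη' : ContDiff ℝ 1 (fderiv ℝ η) := hη.fderiv_right (by norm_num)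
    have hdiff : Differentiable ℝ η := hη.differentiable (by simp)
    obtain ⟨C, hC⟩ := hη'.lipschitzWith_of_hasCompactSupport (hc.fderiv ℝ) (by simp)
    obtain ⟨K, hK⟩ := exists_gagliardoDensity_le_of_modulus (θ := 2) μ hp C.2 hq hq2 (M + M)
    refine ⟨max K 0, forall_mem_range.2 fun x => ?_⟩
    by_cases hx : fderiv ℝ η x = 0
    · refine le_max_of_le_left (hK η x (fun y => ?_) (hosc x))
      simpa using abs_sub_le_of_fderiv_eq_zero hdiff hC hx y
    · refine le_max_of_le_right (integral_undef ?_).le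
      exact not_integrable_gagliardoKernel_of_hasFDerivAt hp.le hqp (hdiff x).hasFDerivAt hx

lemma integrable_gagliardoDensity [Nontrivial E] (hp : 0 < p) (hq : finrank ℝ E < q)
    (hq2 : q < finrank ℝ E + 2 * p) (hη : ContDiff ℝ 2 η) (hc : HasCompactSupport η) :
    Integrable (gagliardoDensity μ p q η) μ := by
  have hq0 : 0 ≤ q := hq.le.trans' (by positivity)
  have hmeas := (stronglyMeasurable_gagliardoDensity (μ := μ) (p := p) (q := q)
    hη.continuous.measurable).aestronglyMeasurable (μ := μ)
  obtain ⟨K, hK⟩ := bddAbove_range_gagliardoDensity (μ := μ) hp hq hq2 hη hc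
  have hloc : LocallyIntegrable (gagliardoDensity μ p q η) μ :=
    (locallyIntegrable_const K).mono hmeas (ae_of_all _ fun x => by
      rw [norm_of_nonneg (gagliardoDensity_nonneg μ p q η x)]
      exact (hK (mem_range_self x)).trans (le_abs_self K))
  exact hloc.integrable_of_isBigO_cocompact
    (gagliardoDensity_isBigO_cocompact hp hq0 hη.continuous hc)
    ((integrable_one_add_norm hq).integrableAtFilter _)

lemma mul_rpow_mul_measureReal_smul {L ρ : ℝ} (hL : 0 < L) (hρ : 0 ≤ ρ) (r : ℝ) (U : Set E) :
    (L * ρ) ^ (-(finrank ℝ E + r)) * μ.real (L • U) =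
      ρ ^ (-(finrank ℝ E + r)) * μ.real U * L ^ (-r) := by
  have hpow : L ^ (-r) = L ^ (-(finrank ℝ E + r)) * L ^ finrank ℝ E := by
    rw [← rpow_natCast, ← rpow_add hL]
    ring_nf
  rw [Measure.real, Measure.addHaar_smul, ENNReal.toReal_mul, ENNReal.toReal_ofReal (abs_nonneg _),
    abs_of_pos (by positivity), ← Measure.real, mul_rpow hL.le hρ, hpow]
  ring

theorem stmt5_general (μ : Measure E) [μ.IsAddHaarMeasure] {ℓ : E →L[ℝ] ℝ} (hℓ : ℓ ≠ 0) {s p : ℝ}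
    (hp : 0 < p) (hs0 : 0 < s) (hs2 : s < 2) :
    ∃ lam : ℝ, 0 < lam ∧
      ∀ a b : ℝ, a < b →
        ∀ η : E → ℝ, ContDiff ℝ 2 η → HasCompactSupport η →
          support η ⊆ {x | a < ℓ x ∧ ℓ x < b} →
          lam * (b - a) ^ (-(s * p)) * ∫ x, |η x| ^ p ∂μ ≤
            ∫ x, ∫ y, |η x - η y| ^ p / ‖x - y‖ ^ (finrank ℝ E + s * p) ∂μ ∂μ := by
  obtain ⟨e, he : ℓ e = 2⟩ :=
    LinearMap.surjective_of_ne_zero (ContinuousLinearMap.coe_injective.ne hℓ) 2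
  have : Nontrivial E := ⟨e, 0, fun h => by simp [h] at he⟩
  set ρ : ℝ := ‖e‖ + 1
  have hρ : 0 < ρ := by positivity
  set U : Set E := ball 0 ρ ∩ {z | 1 < ℓ z}
  have hU : IsOpen U := isOpen_ball.inter (isOpen_lt continuous_const ℓ.continuous)
  have hUpos : 0 < μ.real U :=
    ENNReal.toReal_pos (hU.measure_pos μ ⟨e, by simp [ρ], by simp [he]⟩).ne'
      (measure_ball_lt_top.trans_le' (measure_mono inter_subset_left)).ne
  refine ⟨ρ ^ (-(finrank ℝ E + s * p)) * μ.real U, by positivity, fun a b hab η hη hc hslab => ?_⟩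
  have hL : 0 < b - a := sub_pos.2 hab
  have hsp : s * p ∈ Ioo 0 (2 * p) := ⟨by positivity, by gcongr⟩
  have htsupp : tsupport η ⊆ {x | ℓ x ≤ b} :=
    closure_minimal (fun x hx => (hslab hx).2.le) (isClosed_le ℓ.continuous continuous_const)
  have hbound : ∀ z ∈ (b - a) • U, ‖z‖ ≤ (b - a) * ρ := by
    rintro _ ⟨u, ⟨hu, -⟩, rfl⟩
    rw [mem_ball_zero_iff] at hu
    simp only [norm_smul, norm_of_nonneg hL.le]
    gcongr
  have hout : ∀ z ∈ (b - a) • U, ∀ y ∈ support η, y + z ∉ tsupport η := by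
    rintro _ ⟨u, ⟨-, hu⟩, rfl⟩ y hy hmem
    have hle : ℓ y + (b - a) * ℓ u ≤ b := by simpa using htsupp hmem
    have hlt : (b - a) * 1 < (b - a) * ℓ u := mul_lt_mul_of_pos_left hu hL
    linarith [(hslab hy).1]
  rw [← mul_rpow_mul_measureReal_smul hL hρ.le]
  exact mul_integral_le_integral_gagliardoDensity hp (by positivity) hη.continuous hc
    (integrable_gagliardoDensity hp (by linarith [hsp.1]) (by linarith [hsp.2]) hη hc)
    (hU.measurableSet.const_smul₀ _) hbound hout

end Haar

/-- Proposition 2.5 (Tartar): fractional Poincaré inequality in a slab,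
in its scaling-correct form. -/
theorem stmt5 (N : ℕ) (hN : 0 < N) (s p : ℝ) (hp : 1 < p) (hs0 : 0 < s) (hs1 : s ≤ 1)
    (hsp : s * p ≤ N) :
    ∃ lam : ℝ, 0 < lam ∧
      ∀ a b : ℝ, a < b →
        ∀ η : Euc N → ℝ, ContDiff ℝ (⊤ : ℕ∞) η → HasCompactSupport η →
          Function.support η ⊆ {x : Euc N | a < x ⟨0, hN⟩ ∧ x ⟨0, hN⟩ < b} →
          lam * (b - a) ^ (-(s * p)) * ∫ x, |η x| ^ p ≤
            ∫ x, ∫ y, |η x - η y| ^ p / ‖x - y‖ ^ ((N : ℝ) + s * p) := by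
  have hx₁ : (EuclideanSpace.proj ⟨0, hN⟩ : Euc N →L[ℝ] ℝ) ≠ 0 := fun h => by
    simpa using DFunLike.congr_fun h (EuclideanSpace.single ⟨0, hN⟩ 1)
  obtain ⟨lam, hlam, h⟩ :=
    stmt5_general volume hx₁ (zero_lt_one.trans hp) hs0 (hs1.trans_lt one_lt_two)
  refine ⟨lam, hlam, fun a b hab η hη hc hslab => ?_⟩
  simpa using h a b hab η (hη.of_le (by norm_cast)) hc hslab

end
end

section
/- Let 0 < s < 1 and 1 < p < ∞. Then there exists C = C(s,p,N) > 0 such that for every η ∈ C_c^∞(ℝ^N): C^{-1} ‖η‖_{Ḃ^{s,p}(ℝ^N)} ≤ (∬_{Q_∞} |t^{1−s/2} ∂_t ℍ[η](x,t)|^p dx (dt/t))^{1/p} ≤ C ‖η‖_{Ḃ^{s,p}(ℝ^N)}. -/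
open MeasureTheory Real Set Filter Metric

noncomputable section

open scoped ENNReal NNReal Topology
open Module (finrank)

/-!
Write `G` for the heat kernel and `W = ∂ₜℍ[η]`.

For the upper bound, `∂ₜG(·, t)` has mean zero and is dominated by `t⁻¹ G(·, 2t)`, so
`|W(x, t)| ≲ t⁻¹ ∫ G(x - y, 2t) |η(x) - η(y)| dy`. After Jensen's inequality for the probability
density `G(·, 2t)`, the time integral of the weight is an exact multiple of `|x - y| ^ (-N - s p)`.

For the lower bound, `ℍ[η]` joins `η` at `t = 0` to `0` at `t = ∞`, so an increment of `η` is the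
time integral of the same increment of `W`. By the semigroup property `W(·, 2σ) = G(·, σ) ∗ W(·, σ)`
the increment can be moved to the kernel, whose increment by `h` has `L¹` norm
`≲ min(1, |h| / √σ)`. Jensen's inequality for the measure
`σ ^ (s/2 - 1) |G(y + h, σ) - G(y, σ)| dy dσ`, of mass `≲ |h| ^ s`, followed by integration in `x`
and then in `h`, gives back the thermic integral.
-/

section Lintegral

lemma lintegral_mul_rpow_le {α : Type*} [MeasurableSpace α] {μ : Measure α} {p : ℝ} (hp : 1 ≤ p)
    {k f : α → ℝ≥0∞} (hk : AEMeasurable k μ) (hf : AEMeasurable f μ) :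
    (∫⁻ a, k a * f a ∂μ) ^ p ≤ (∫⁻ a, k a ∂μ) ^ (p - 1) * ∫⁻ a, k a * f a ^ p ∂μ := by
  have hp0 : 0 < p := by positivity
  have hq : 0 ≤ 1 - 1 / p := by rw [sub_nonneg, div_le_one hp0]; exact hp
  have hfactor (a : α) : k a * f a = k a ^ (1 - 1 / p) * (k a * f a ^ p) ^ (1 / p) := by
    rw [ENNReal.mul_rpow_of_nonneg _ _ (by positivity), ← mul_assoc,
      ← ENNReal.rpow_add_of_nonneg _ _ hq (by positivity), sub_add_cancel, ENNReal.rpow_one,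
      ← ENNReal.rpow_mul, mul_one_div_cancel hp0.ne', ENNReal.rpow_one]
  calc (∫⁻ a, k a * f a ∂μ) ^ p
      = (∫⁻ a, k a ^ (1 - 1 / p) * (k a * f a ^ p) ^ (1 / p) ∂μ) ^ p := by simp_rw [← hfactor]
    _ ≤ ((∫⁻ a, k a ∂μ) ^ (1 - 1 / p) * (∫⁻ a, k a * f a ^ p ∂μ) ^ (1 / p)) ^ p := by
      gcongr
      exact ENNReal.lintegral_mul_norm_pow_le hk (hk.mul (hf.pow_const p)) hq (by positivity)
        (by ring)
    _ = (∫⁻ a, k a ∂μ) ^ (p - 1) * ∫⁻ a, k a * f a ^ p ∂μ := by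
      rw [ENNReal.mul_rpow_of_nonneg _ _ hp0.le, ← ENNReal.rpow_mul, ← ENNReal.rpow_mul,
        one_div_mul_cancel hp0.ne', ENNReal.rpow_one, sub_mul, one_mul, one_div_mul_cancel hp0.ne']

lemma lintegral_lintegral_mul_rpow_le {α β : Type*} [MeasurableSpace α] [MeasurableSpace β]
    {μ : Measure α} {ν : Measure β} [SFinite ν] {p : ℝ} (hp : 1 ≤ p) {k f : α → β → ℝ≥0∞}
    (hk : AEMeasurable (Function.uncurry k) (μ.prod ν))
    (hf : AEMeasurable (Function.uncurry f) (μ.prod ν)) :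
    (∫⁻ a, ∫⁻ b, k a b * f a b ∂ν ∂μ) ^ p ≤
      (∫⁻ a, ∫⁻ b, k a b ∂ν ∂μ) ^ (p - 1) * ∫⁻ a, ∫⁻ b, k a b * f a b ^ p ∂ν ∂μ := by
  rw [lintegral_lintegral (hk.mul hf), lintegral_lintegral hk,
    lintegral_lintegral (hk.mul (hf.pow_const p))]
  exact lintegral_mul_rpow_le hp hk hf

lemma lintegral_lintegral_lintegral_mul_sub {α G : Type*} [MeasurableSpace α] [AddGroup G]
    [MeasurableSpace G] [MeasurableAdd G] [MeasurableSub₂ G] {ν : Measure α} [SFinite ν]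
    {μ : Measure G} [SFinite μ] [μ.IsAddRightInvariant] {k f : α → G → ℝ≥0∞}
    (hk : Measurable (Function.uncurry k)) (hf : Measurable (Function.uncurry f)) :
    ∫⁻ x, ∫⁻ a, ∫⁻ y, k a y * f a (x - y) ∂μ ∂ν ∂μ =
      ∫⁻ a, (∫⁻ y, k a y ∂μ) * ∫⁻ x, f a x ∂μ ∂ν := by
  have hka (a : α) : Measurable (k a) := hk.of_uncurry_left
  have hfa (a : α) : Measurable (f a) := hf.of_uncurry_left
  have hkf : Measurable fun q : (G × α) × G => k q.1.2 q.2 * f q.1.2 (q.1.1 - q.2) := by fun_prop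
  rw [lintegral_lintegral_swap hkf.lintegral_prod_right'.aemeasurable]
  refine lintegral_congr fun a => ?_
  rw [lintegral_lintegral_swap (by fun_prop), ← lintegral_mul_const _ (hka a)]
  refine lintegral_congr fun y => ?_
  rw [lintegral_const_mul _ (by fun_prop), lintegral_sub_right_eq_self (f a)]

lemma lintegral_Ioc_rpow {a R : ℝ} (ha : -1 < a) (hR : 0 ≤ R) :
    ∫⁻ t in Ioc 0 R, ENNReal.ofReal (t ^ a) = ENNReal.ofReal (R ^ (a + 1) / (a + 1)) := by
  rw [← ofReal_integral_eq_lintegral_ofReal, ← intervalIntegral.integral_of_le hR,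
    integral_rpow (.inl ha), Real.zero_rpow (by linarith), sub_zero]
  · exact (intervalIntegrable_iff_integrableOn_Ioc_of_le hR).1
      (intervalIntegral.intervalIntegrable_rpow' ha)
  · filter_upwards [ae_restrict_mem measurableSet_Ioc] with t ht
    exact Real.rpow_nonneg ht.1.le a

lemma lintegral_Ioi_rpow {a R : ℝ} (ha : a < -1) (hR : 0 < R) :
    ∫⁻ t in Ioi R, ENNReal.ofReal (t ^ a) = ENNReal.ofReal (R ^ (a + 1) / (-(a + 1))) := by
  rw [← ofReal_integral_eq_lintegral_ofReal (integrableOn_Ioi_rpow_of_lt ha hR),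
    integral_Ioi_rpow_of_lt ha hR, neg_div, div_neg]
  filter_upwards [ae_restrict_mem measurableSet_Ioi] with t ht
  exact Real.rpow_nonneg (hR.trans ht).le a

lemma lintegral_rpow_mul_min {a b ρ : ℝ} (ha : 0 < a) (hab : a < b) (hρ : 0 < ρ) :
    ∫⁻ r in Ioi 0, ENNReal.ofReal (r ^ (-a - 1) * min 1 ((r / ρ) ^ b)) =
      ENNReal.ofReal ((1 / (b - a) + 1 / a) * ρ ^ (-a)) := by
  have hb : 0 < b := ha.trans hab
  have hnear : ∀ r ∈ Ioc 0 ρ, ENNReal.ofReal (r ^ (-a - 1) * min 1 ((r / ρ) ^ b)) =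
      ENNReal.ofReal (ρ ^ (-b)) * ENNReal.ofReal (r ^ (b - a - 1)) := by
    rintro r ⟨hr, hrρ⟩
    rw [min_eq_right (Real.rpow_le_one (by positivity) ((div_le_one hρ).2 hrρ) hb.le),
      ← ENNReal.ofReal_mul (by positivity), Real.div_rpow hr.le hρ.le, Real.rpow_neg hρ.le,
      show b - a - 1 = (-a - 1) + b by ring, Real.rpow_add hr]
    ring_nf
  have hfar : ∀ r ∈ Ioi ρ, ENNReal.ofReal (r ^ (-a - 1) * min 1 ((r / ρ) ^ b)) =
      ENNReal.ofReal (r ^ (-a - 1)) := fun r hr => by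
    rw [min_eq_left (Real.one_le_rpow ((one_le_div hρ).2 (le_of_lt hr)) hb.le), mul_one]
  rw [← Ioc_union_Ioi_eq_Ioi hρ.le, lintegral_union measurableSet_Ioi Ioc_disjoint_Ioi_same,
    setLIntegral_congr_fun measurableSet_Ioc hnear, setLIntegral_congr_fun measurableSet_Ioi hfar,
    lintegral_const_mul' _ _ ENNReal.ofReal_ne_top, lintegral_Ioc_rpow (by linarith) hρ.le,
    lintegral_Ioi_rpow (by linarith) hρ, ← ENNReal.ofReal_mul (by positivity), sub_add_cancel,
    sub_add_cancel, neg_neg, ← ENNReal.ofReal_add _ (by positivity), sub_eq_neg_add b a,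
    Real.rpow_add hρ, Real.rpow_neg hρ.le b]
  · congr 1
    field_simp
  · have : 0 < b - a := sub_pos.2 hab
    positivity

lemma lintegral_rpow_mul_min_div_sqrt {s r : ℝ} (hs0 : 0 < s) (hs1 : s < 1) (hr : 0 < r) :
    ∫⁻ t in Ioi 0, ENNReal.ofReal (t ^ (s / 2 - 1) * min 1 (r / √t)) =
      ENNReal.ofReal ((2 / s + 2 / (1 - s)) * r ^ s) := by
  have hint : ∀ t ∈ Ioi (0 : ℝ), ENNReal.ofReal (t ^ (s / 2 - 1) * min 1 (r / √t)) =
      ENNReal.ofReal r *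
        ENNReal.ofReal (t ^ (-((1 - s) / 2) - 1) * min 1 ((t / r ^ 2) ^ (1 / 2 : ℝ))) := by
    intro t (ht : 0 < t)
    rw [← ENNReal.ofReal_mul hr.le, ← Real.sqrt_eq_rpow, Real.sqrt_div ht.le, Real.sqrt_sq hr.le,
      show -((1 - s) / 2) - 1 = (s / 2 - 1) + -(1 / 2) by ring, Real.rpow_add ht,
      Real.rpow_neg ht.le, ← Real.sqrt_eq_rpow]
    have hmin : min 1 (r / √t) = r / √t * min 1 (√t / r) := by
      rw [mul_min_of_nonneg _ _ (by positivity), mul_one, div_mul_div_cancel₀ (by positivity),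
        div_self hr.ne', min_comm]
    rw [hmin]
    ring_nf
  rw [setLIntegral_congr_fun measurableSet_Ioi hint, lintegral_const_mul' _ _ ENNReal.ofReal_ne_top,
    lintegral_rpow_mul_min (by linarith) (by linarith) (by positivity), ← ENNReal.ofReal_mul hr.le,
    ← Real.rpow_natCast, ← Real.rpow_mul hr.le,
    show ((2 : ℕ) : ℝ) * -((1 - s) / 2) = s - 1 by push_cast; ring, Real.rpow_sub_one hr.ne']
  have : 1 - s ≠ 0 := (sub_pos.2 hs1).ne'
  rw [show (1 : ℝ) / 2 - (1 - s) / 2 = s / 2 by ring]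
  congr 1
  field_simp

lemma integral_rpow_mul_exp_neg_div_Ioi {b c : ℝ} (hb : 0 < b) (hc : 0 < c) :
    ∫ t in Ioi 0, t ^ (-b - 1) * Real.exp (-(c / t)) = (1 / c) ^ b * Real.Gamma b := by
  -- The substitution `t ↦ t⁻¹` turns this into the defining integral of `Γ b`.
  rw [← Real.integral_rpow_mul_exp_neg_mul_Ioi hb hc,
    ← integral_comp_rpow_Ioi _ (neg_ne_zero.2 one_ne_zero)]
  refine setIntegral_congr_fun measurableSet_Ioi fun t (ht : 0 < t) => ?_
  simp only [abs_neg, abs_one, one_mul, smul_eq_mul, ← Real.rpow_mul ht.le]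
  rw [← mul_assoc, ← Real.rpow_add ht, Real.rpow_neg_one, div_inv_eq_mul]
  ring_nf

lemma lintegral_rpow_mul_exp_neg_div_Ioi {b c : ℝ} (hb : 0 < b) (hc : 0 < c) :
    ∫⁻ t in Ioi 0, ENNReal.ofReal (t ^ (-b - 1) * Real.exp (-(c / t))) =
      ENNReal.ofReal ((1 / c) ^ b * Real.Gamma b) := by
  rw [← integral_rpow_mul_exp_neg_div_Ioi hb hc, ofReal_integral_eq_lintegral_ofReal]
  · refine .of_integral_ne_zero ?_
    rw [integral_rpow_mul_exp_neg_div_Ioi hb hc]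
    have := Real.Gamma_pos_of_pos hb
    positivity
  · filter_upwards [ae_restrict_mem measurableSet_Ioi] with t (ht : 0 < t)
    positivity

lemma enorm_le_lintegral_Ioi_of_hasDerivAt {F : Type*} [NormedAddCommGroup F] [NormedSpace ℝ F]
    [CompleteSpace F] {f f' : ℝ → F} {a : ℝ} {l : F} (hf : ∀ t ∈ Ioi a, HasDerivAt f (f' t) t)
    (hf' : AEStronglyMeasurable f' (volume.restrict (Ioi a)))
    (hl : Tendsto f (𝓝[>] a) (𝓝 l)) (h0 : Tendsto f atTop (𝓝 0)) :
    ‖l‖ₑ ≤ ∫⁻ t in Ioi a, ‖f' t‖ₑ := by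
  by_cases hfin : ∫⁻ t in Ioi a, ‖f' t‖ₑ = ∞
  · exact hfin ▸ le_top
  have hcont : ContinuousWithinAt (Function.update f a l) (Ici a) a := by
    rwa [continuousWithinAt_update_same, Ici_sdiff_left]
  have heq : ∀ t ∈ Ioi a, Function.update f a l t = f t := fun t ht =>
    Function.update_of_ne (ne_of_gt ht) ..
  have hderiv : ∀ t ∈ Ioi a, HasDerivAt (Function.update f a l) (f' t) t := fun t ht =>
    (hf t ht).congr_of_eventuallyEq (eventuallyEq_of_mem (Ioi_mem_nhds ht) heq)
  have hlim : Tendsto (Function.update f a l) atTop (𝓝 0) :=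
    h0.congr' (by filter_upwards [Ioi_mem_atTop a] with t ht using (heq t ht).symm)
  have hint : IntegrableOn f' (Ioi a) := ⟨hf', lt_top_iff_ne_top.2 hfin⟩
  have hftc := integral_Ioi_of_hasDerivAt_of_tendsto hcont hderiv hint hlim
  rw [Function.update_self, zero_sub] at hftc
  rw [← enorm_neg, ← hftc]
  exact enorm_integral_le_lintegral_enorm f'

lemma integral_integral_eq_toReal_lintegral_lintegral {α β : Type*} [MeasurableSpace α]
    [MeasurableSpace β] {μ : Measure α} {ν : Measure β} [SFinite ν] {f : α → β → ℝ}
    (hf : AEMeasurable (Function.uncurry f) (μ.prod ν)) (hf0 : ∀ᵐ a ∂μ, ∀ b, 0 ≤ f a b)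
    (hfin : ∫⁻ a, ∫⁻ b, ENNReal.ofReal (f a b) ∂ν ∂μ ≠ ∞) :
    ∫ a, ∫ b, f a b ∂ν ∂μ = (∫⁻ a, ∫⁻ b, ENNReal.ofReal (f a b) ∂ν ∂μ).toReal := by
  have hmeas : AEMeasurable (fun a => ∫⁻ b, ENNReal.ofReal (f a b) ∂ν) μ :=
    hf.ennreal_ofReal.lintegral_prod_right'
  have hinner : ∀ᵐ a ∂μ, ∫ b, f a b ∂ν = (∫⁻ b, ENNReal.ofReal (f a b) ∂ν).toReal := by
    filter_upwards [hf0, hf.aestronglyMeasurable.prodMk_left] with a ha hsm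
    exact integral_eq_lintegral_of_nonneg_ae (.of_forall ha) hsm
  rw [integral_congr_ae hinner, integral_toReal hmeas (ae_lt_top' hmeas hfin)]

lemma toReal_rpow_le_mul {A B : ℝ≥0∞} {C : ℝ≥0} {r : ℝ} (hr : 0 ≤ r) (hB : B ≠ ∞)
    (h : A ≤ C * B) : A.toReal ^ r ≤ (C : ℝ) ^ r * B.toReal ^ r := by
  rw [← Real.mul_rpow C.coe_nonneg ENNReal.toReal_nonneg]
  refine Real.rpow_le_rpow ENNReal.toReal_nonneg ?_ hr
  simpa using ENNReal.toReal_mono (ENNReal.mul_ne_top ENNReal.coe_ne_top hB) h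

end Lintegral

section Radial

variable {E : Type*} [NormedAddCommGroup E] [NormedSpace ℝ E] [FiniteDimensional ℝ E]
  [MeasurableSpace E] [BorelSpace E] (μ : Measure E) [μ.IsAddHaarMeasure]

lemma lintegral_comp_norm [Nontrivial E] {f : ℝ → ℝ≥0∞} (hf : Measurable f) :
    ∫⁻ x, f ‖x‖ ∂μ = finrank ℝ E * μ (ball 0 1) *
      ∫⁻ r in Ioi 0, ENNReal.ofReal (r ^ (finrank ℝ E - 1)) * f r := by
  calc ∫⁻ x, f ‖x‖ ∂μ
      = ∫⁻ x : ({0}ᶜ : Set E), f ‖x.1‖ ∂(μ.comap (↑)) := by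
        rw [lintegral_subtype_comap (measurableSet_singleton _).compl fun x => f ‖x‖,
          restrict_compl_singleton]
    _ = ∫⁻ z, f z.2 ∂(μ.toSphere.prod (.volumeIoiPow (finrank ℝ E - 1))) := by
        simpa using μ.measurePreserving_homeomorphUnitSphereProd.lintegral_comp_emb
          (Homeomorph.measurableEmbedding _) fun z => f z.2
    _ = μ.toSphere univ * ∫⁻ r : Ioi (0 : ℝ), f r ∂(.volumeIoiPow (finrank ℝ E - 1)) := by
        rw [lintegral_prod _ (by fun_prop)]
        simp only [lintegral_const, mul_comm]
    _ = _ := by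
        rw [μ.toSphere_apply_univ, Measure.volumeIoiPow, lintegral_withDensity_eq_lintegral_mul _
          (by fun_prop) (by fun_prop), ← lintegral_subtype_comap measurableSet_Ioi]
        rfl

lemma exists_lintegral_min_div_rpow_le {a b : ℝ} (ha : 0 < a) (hab : a < b) :
    ∃ C : ℝ≥0, ∀ ρ : ℝ, 0 < ρ →
      ∫⁻ h, ENNReal.ofReal (min 1 ((‖h‖ / ρ) ^ b) / ‖h‖ ^ (finrank ℝ E + a)) ∂μ ≤
        C * ENNReal.ofReal (ρ ^ (-a)) := by
  have hb : 0 < b := ha.trans hab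
  rcases subsingleton_or_nontrivial E with hE | hE
  · refine ⟨0, fun ρ _ => ?_⟩
    simp [Subsingleton.elim _ (0 : E), Real.zero_rpow hb.ne']
  refine ⟨(finrank ℝ E * μ (ball 0 1) * ENNReal.ofReal (1 / (b - a) + 1 / a)).toNNReal,
    fun ρ hρ => le_of_eq ?_⟩
  have hint : ∀ r ∈ Ioi (0 : ℝ), ENNReal.ofReal (r ^ (finrank ℝ E - 1)) *
      ENNReal.ofReal (min 1 ((r / ρ) ^ b) / r ^ (finrank ℝ E + a)) =
        ENNReal.ofReal (r ^ (-a - 1) * min 1 ((r / ρ) ^ b)) := by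
    intro r (hr : 0 < r)
    rw [← ENNReal.ofReal_mul (by positivity), ← Real.rpow_natCast,
      Nat.cast_pred Module.finrank_pos,
      show -a - 1 = (finrank ℝ E - 1) - (finrank ℝ E + a) by ring, Real.rpow_sub hr _ (_ + a)]
    ring_nf
  rw [lintegral_comp_norm μ (f := fun r => ENNReal.ofReal (min 1 ((r / ρ) ^ b) /
      r ^ (finrank ℝ E + a))) (by fun_prop), setLIntegral_congr_fun measurableSet_Ioi hint,
    lintegral_rpow_mul_min ha hab hρ, ENNReal.coe_toNNReal, ENNReal.ofReal_mul, ← mul_assoc]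
  · have := sub_pos.2 hab
    positivity
  · have hV : μ (ball (0 : E) 1) ≠ ∞ := measure_ball_lt_top.ne
    exact ENNReal.mul_ne_top (by finiteness) ENNReal.ofReal_ne_top

lemma exists_lintegral_min_div_sqrt_mul_rpow_le {s : ℝ} (hs0 : 0 < s) (hs1 : s < 1) :
    ∃ C : ℝ≥0, ∀ t : ℝ, 0 < t →
      (∫⁻ h, ENNReal.ofReal (min 1 (‖h‖ / √t) / ‖h‖ ^ (finrank ℝ E + s)) ∂μ) *
        ENNReal.ofReal (t ^ (s / 2)) ≤ C := by
  obtain ⟨C, hC⟩ := exists_lintegral_min_div_rpow_le μ hs0 hs1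
  refine ⟨C, fun t ht => ?_⟩
  have hcancel : √t ^ (-s) * t ^ (s / 2) = 1 := by
    rw [Real.sqrt_eq_rpow, ← Real.rpow_mul ht.le, ← Real.rpow_add ht,
      show 1 / 2 * -s + s / 2 = 0 by ring, Real.rpow_zero]
  have hle := hC (√t) (Real.sqrt_pos.2 ht)
  simp_rw [Real.rpow_one] at hle
  refine (mul_le_mul_left hle _).trans_eq ?_
  rw [mul_assoc, ← ENNReal.ofReal_mul (by positivity), hcancel, ENNReal.ofReal_one, mul_one]

end Radial

section Increment

variable {E F : Type*} [NormedAddCommGroup E] [NormedAddCommGroup F] {f : E → F} {p : ℝ}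

lemma exists_enorm_add_sub_rpow_le_of_lipschitzWith (hp : 0 ≤ p) {L : ℝ≥0}
    (hL : LipschitzWith L f) (hcs : HasCompactSupport f) :
    ∃ B : ℝ≥0, ∀ x h, ‖f (x + h) - f x‖ₑ ^ p ≤ B * ENNReal.ofReal (min 1 (‖h‖ ^ p)) := by
  obtain ⟨M, hM⟩ := hcs.exists_bound_of_continuous hL.continuous
  have hbound (x : E) : ‖f x‖ₑ ≤ M.toNNReal := by
    rw [← ofReal_norm]
    exact ENNReal.ofReal_le_ofReal (hM x)
  refine ⟨(L + 2 * M.toNNReal) ^ p, fun x h => ?_⟩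
  have hle : ‖f (x + h) - f x‖ₑ ≤ (L + 2 * M.toNNReal) * min 1 ‖h‖ₑ := by
    rcases le_total ‖h‖ₑ 1 with hh | hh
    · rw [min_eq_right hh]
      refine le_trans ?_ (mul_le_mul_left le_self_add _)
      simpa [edist_eq_enorm_sub] using hL (x + h) x
    · rw [min_eq_left hh, mul_one, two_mul]
      exact (enorm_sub_le.trans (add_le_add (hbound _) (hbound _))).trans le_add_self
  calc ‖f (x + h) - f x‖ₑ ^ p
      ≤ ((L + 2 * M.toNNReal) * min 1 ‖h‖ₑ) ^ p := by gcongr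
    _ = ((L + 2 * M.toNNReal) ^ p : ℝ≥0) * ENNReal.ofReal (min 1 (‖h‖ ^ p)) := by
      rw [ENNReal.mul_rpow_of_nonneg _ _ hp, (ENNReal.monotone_rpow_of_nonneg hp).map_min,
        ENNReal.one_rpow, ENNReal.ofReal_min, ENNReal.ofReal_one,
        ← ENNReal.ofReal_rpow_of_nonneg (norm_nonneg h) hp, ofReal_norm,
        ENNReal.coe_rpow_of_nonneg _ hp]
      push_cast
      rfl

variable [MeasurableSpace E] [MeasurableAdd E] (μ : Measure E) [μ.IsAddRightInvariant]

lemma lintegral_enorm_add_sub_rpow_le_mul_measure_tsupport (hp : 0 < p) {B : ℝ≥0∞} {h : E}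
    (hB : ∀ x, ‖f (x + h) - f x‖ₑ ^ p ≤ B) :
    ∫⁻ x, ‖f (x + h) - f x‖ₑ ^ p ∂μ ≤ B * (2 * μ (tsupport f)) := by
  have hsupp : (fun x => ‖f (x + h) - f x‖ₑ ^ p).support ⊆
      (· + h) ⁻¹' tsupport f ∪ tsupport f := by
    intro x hx
    by_contra hmem
    rw [mem_union, not_or, mem_preimage] at hmem
    rw [Function.mem_support, image_eq_zero_of_notMem_tsupport hmem.1,
      image_eq_zero_of_notMem_tsupport hmem.2, sub_zero, enorm_zero,
      ENNReal.zero_rpow_of_pos hp] at hx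
    exact hx rfl
  calc ∫⁻ x, ‖f (x + h) - f x‖ₑ ^ p ∂μ
      = ∫⁻ x in (· + h) ⁻¹' tsupport f ∪ tsupport f, ‖f (x + h) - f x‖ₑ ^ p ∂μ :=
        (setLIntegral_eq_of_support_subset hsupp).symm
    _ ≤ B * μ ((· + h) ⁻¹' tsupport f ∪ tsupport f) := by
        rw [← setLIntegral_const]
        exact lintegral_mono hB
    _ ≤ B * (2 * μ (tsupport f)) := by
        rw [two_mul]
        gcongr
        refine (measure_union_le _ _).trans_eq ?_
        rw [measure_preimage_add_right]

end Increment

section Kernel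

variable {E : Type*} [NormedAddCommGroup E] [InnerProductSpace ℝ E]

/-- The heat kernel `(4πt) ^ (-d / 2) * exp (-‖z‖² / (4t))` of a `d`-dimensional Euclidean space. -/
def heatKernel (z : E) (t : ℝ) : ℝ :=
  (4 * π * t) ^ (-(finrank ℝ E : ℝ) / 2) * Real.exp (-‖z‖ ^ 2 / (4 * t))

/-- The time derivative of the heat kernel. -/
def heatKernelDeriv (z : E) (t : ℝ) : ℝ :=
  (‖z‖ ^ 2 / (4 * t ^ 2) - finrank ℝ E / (2 * t)) * heatKernel z t

variable (E) in
/-- A dimensional constant with which the kernel at time `2 * t` dominates both `t * ∂ₜG` and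
`√t * ∇G` at time `t`. -/
def heatConst : ℝ≥0 := 2 * (1 + finrank ℝ E) * 2 ^ ((finrank ℝ E : ℝ) / 2)

lemma coe_heatConst :
    (heatConst E : ℝ) = 2 * (1 + finrank ℝ E) * 2 ^ ((finrank ℝ E : ℝ) / 2) := by
  simp [heatConst]

lemma two_le_heatConst : 2 ≤ (heatConst E : ℝ) := by
  have h1 : (1 : ℝ) ≤ 2 ^ ((finrank ℝ E : ℝ) / 2) := Real.one_le_rpow one_le_two (by positivity)
  have : (0 : ℝ) ≤ finrank ℝ E := by positivity
  rw [coe_heatConst]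
  nlinarith

lemma heatKernel_pos (z : E) {t : ℝ} (ht : 0 < t) : 0 < heatKernel z t := by
  unfold heatKernel; positivity

lemma heatKernel_le (z : E) {t : ℝ} (ht : 0 < t) :
    heatKernel z t ≤ (4 * π * t) ^ (-(finrank ℝ E : ℝ) / 2) := by
  refine mul_le_of_le_one_right (by positivity) (Real.exp_le_one_iff.2 ?_)
  exact div_nonpos_of_nonpos_of_nonneg (neg_nonpos.2 (by positivity)) (by positivity)

lemma enorm_heatKernel (z : E) {t : ℝ} (ht : 0 < t) :
    ‖heatKernel z t‖ₑ = ENNReal.ofReal (heatKernel z t) :=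
  Real.enorm_of_nonneg (heatKernel_pos z ht).le

@[fun_prop]
lemma continuous_heatKernel (t : ℝ) : Continuous fun z : E => heatKernel z t := by
  unfold heatKernel; fun_prop

@[fun_prop]
lemma continuous_heatKernelDeriv (t : ℝ) : Continuous fun z : E => heatKernelDeriv z t := by
  unfold heatKernelDeriv; fun_prop

lemma hasDerivAt_heatKernel (z : E) {t : ℝ} (ht : 0 < t) :
    HasDerivAt (heatKernel z) (heatKernelDeriv z t) t := by
  have hpow : HasDerivAt (fun τ : ℝ => (4 * π * τ) ^ (-(finrank ℝ E : ℝ) / 2)) _ t :=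
    ((hasDerivAt_id' t).const_mul (4 * π)).rpow_const (.inl (by positivity))
  have hexponent : HasDerivAt (fun τ : ℝ => -‖z‖ ^ 2 / (4 * τ)) _ t :=
    (hasDerivAt_const t (-‖z‖ ^ 2)).div ((hasDerivAt_id' t).const_mul 4) (by positivity)
  convert! hpow.mul hexponent.exp using 1
  rw [Real.rpow_sub_one (by positivity)]
  unfold heatKernelDeriv heatKernel
  field_simp
  ring

lemma heatKernel_le_mul (z : E) {t τ T : ℝ} (ht : 0 < t) (htτ : t ≤ τ) (hτT : τ ≤ T) :
    heatKernel z τ ≤ (T / t) ^ ((finrank ℝ E : ℝ) / 2) * heatKernel z T := by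
  have hτ : 0 < τ := ht.trans_le htτ
  have hT : 0 < T := hτ.trans_le hτT
  have hconst : (T / t) ^ ((finrank ℝ E : ℝ) / 2) * (4 * π * T) ^ (-(finrank ℝ E : ℝ) / 2) =
      (4 * π * t) ^ (-(finrank ℝ E : ℝ) / 2) := by
    rw [show 4 * π * T = (4 * π * t) * (T / t) by field_simp,
      Real.mul_rpow (by positivity) (by positivity), mul_left_comm,
      ← Real.rpow_add (by positivity), neg_div, add_neg_cancel, Real.rpow_zero, mul_one]
  unfold heatKernel
  rw [← mul_assoc, hconst]
  refine mul_le_mul ?_ (Real.exp_le_exp.2 ?_) (by positivity) (by positivity)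
  · refine Real.rpow_le_rpow_of_nonpos (by positivity) (by gcongr) ?_
    exact div_nonpos_of_nonpos_of_nonneg (neg_nonpos.2 (by positivity)) (by positivity)
  · rw [neg_div, neg_div]
    gcongr

lemma heatKernel_eq_pow_mul (z : E) {t : ℝ} (ht : 0 < t) :
    heatKernel z t = (√t)⁻¹ ^ finrank ℝ E * heatKernel ((√t)⁻¹ • z) 1 := by
  have hpow : (√t)⁻¹ ^ finrank ℝ E = t ^ (-(finrank ℝ E : ℝ) / 2) := by
    rw [Real.sqrt_eq_rpow, ← Real.rpow_neg ht.le, ← Real.rpow_natCast, ← Real.rpow_mul ht.le]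
    ring_nf
  unfold heatKernel
  rw [hpow, norm_smul, mul_pow, norm_inv, inv_pow, Real.norm_of_nonneg (by positivity),
    Real.sq_sqrt ht.le, Real.mul_rpow (by positivity) ht.le]
  field_simp

lemma tendsto_norm_pow_mul_heatKernel_cobounded {t : ℝ} (ht : 0 < t) (n : ℕ) :
    Tendsto (fun z : E => ‖z‖ ^ n * heatKernel z t) (Bornology.cobounded E) (𝓝 0) := by
  have hsq : Tendsto (fun z : E => ‖z‖ ^ 2) (Bornology.cobounded E) atTop :=
    (tendsto_pow_atTop two_ne_zero).comp tendsto_norm_cobounded_atTop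
  have hdecay := ((tendsto_rpow_mul_exp_neg_mul_atTop_nhds_zero (n / 2) (1 / (4 * t))
    (by positivity)).comp hsq).const_mul ((4 * π * t) ^ (-(finrank ℝ E : ℝ) / 2))
  rw [mul_zero] at hdecay
  refine hdecay.congr fun z => ?_
  have hpow : (‖z‖ ^ 2) ^ ((n : ℝ) / 2) = ‖z‖ ^ n := by
    rw [← Real.rpow_natCast_mul (norm_nonneg z), ← Real.rpow_natCast]
    congr 1
    push_cast
    ring
  rw [Function.comp_apply, hpow, heatKernel,
    show -‖z‖ ^ 2 / (4 * t) = -(1 / (4 * t)) * ‖z‖ ^ 2 by ring]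
  ring

lemma one_add_mul_heatKernel_le (z : E) {t : ℝ} (ht : 0 < t) :
    (1 + ‖z‖ ^ 2 / (4 * t)) * heatKernel z t ≤
      2 * 2 ^ ((finrank ℝ E : ℝ) / 2) * heatKernel z (2 * t) := by
  set u : ℝ := ‖z‖ ^ 2 / (4 * t) with hu
  set A : ℝ := (4 * π * t) ^ (-(finrank ℝ E : ℝ) / 2)
  have hexp : (1 + u) * Real.exp (-u) ≤ 2 * Real.exp (-u / 2) := by
    have h := Real.add_one_le_exp (u / 2)
    have hu2 : Real.exp (-u) = Real.exp (-u / 2) * Real.exp (-u / 2) := by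
      rw [← Real.exp_add, add_halves]
    have hone : Real.exp (u / 2) * Real.exp (-u / 2) = 1 := by
      rw [← Real.exp_add, neg_div, add_neg_cancel, Real.exp_zero]
    calc (1 + u) * Real.exp (-u) ≤ 2 * Real.exp (u / 2) * Real.exp (-u) := by gcongr; linarith
      _ = 2 * (Real.exp (u / 2) * Real.exp (-u / 2)) * Real.exp (-u / 2) := by rw [hu2]; ring
      _ = 2 * Real.exp (-u / 2) := by rw [hone, mul_one]
  have hG : heatKernel z t = A * Real.exp (-u) := by rw [hu, ← neg_div]; rfl
  have hG2 : 2 ^ ((finrank ℝ E : ℝ) / 2) * heatKernel z (2 * t) = A * Real.exp (-u / 2) := by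
    rw [heatKernel, show 4 * π * (2 * t) = 2 * (4 * π * t) by ring,
      Real.mul_rpow zero_le_two (by positivity), ← mul_assoc, ← mul_assoc,
      ← Real.rpow_add zero_lt_two, neg_div, add_neg_cancel, Real.rpow_zero, one_mul, ← neg_div, hu]
    congr 2
    ring
  rw [hG, mul_assoc 2, hG2]
  calc (1 + u) * (A * Real.exp (-u)) = A * ((1 + u) * Real.exp (-u)) := by ring
    _ ≤ A * (2 * Real.exp (-u / 2)) := by gcongr
    _ = 2 * (A * Real.exp (-u / 2)) := by ring

lemma abs_heatKernelDeriv_le (z : E) {t : ℝ} (ht : 0 < t) :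
    |heatKernelDeriv z t| ≤ heatConst E / t * heatKernel z (2 * t) := by
  have hG := heatKernel_pos z ht
  set d : ℝ := (finrank ℝ E : ℝ)
  have hfactor : |‖z‖ ^ 2 / (4 * t ^ 2) - d / (2 * t)| ≤
      (1 + d) / t * (1 + ‖z‖ ^ 2 / (4 * t)) := by
    have hd0 : 0 ≤ d := by positivity
    have hu : 0 ≤ ‖z‖ ^ 2 / (4 * t) := by positivity
    calc |‖z‖ ^ 2 / (4 * t ^ 2) - d / (2 * t)|
        ≤ ‖z‖ ^ 2 / (4 * t ^ 2) + d / (2 * t) := by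
          refine (abs_sub _ _).trans_eq ?_
          rw [abs_of_nonneg (by positivity), abs_of_nonneg (by positivity)]
      _ = 1 / t * (‖z‖ ^ 2 / (4 * t) + d / 2) := by field_simp
      _ ≤ 1 / t * ((1 + d) * (1 + ‖z‖ ^ 2 / (4 * t))) := by gcongr; nlinarith
      _ = (1 + d) / t * (1 + ‖z‖ ^ 2 / (4 * t)) := by ring
  calc |heatKernelDeriv z t|
      = |‖z‖ ^ 2 / (4 * t ^ 2) - d / (2 * t)| * heatKernel z t := by
        rw [heatKernelDeriv, abs_mul, abs_of_pos hG]
    _ ≤ (1 + d) / t * (1 + ‖z‖ ^ 2 / (4 * t)) * heatKernel z t := by gcongr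
    _ = (1 + d) / t * ((1 + ‖z‖ ^ 2 / (4 * t)) * heatKernel z t) := by ring
    _ ≤ (1 + d) / t * (2 * 2 ^ (d / 2) * heatKernel z (2 * t)) := by
        exact mul_le_mul_of_nonneg_left (one_add_mul_heatKernel_le z ht) (by positivity)
    _ = heatConst E / t * heatKernel z (2 * t) := by rw [coe_heatConst]; ring

lemma abs_heatKernelDeriv_le_const (z : E) {t : ℝ} (ht : 0 < t) :
    |heatKernelDeriv z t| ≤ heatConst E / t * (4 * π * (2 * t)) ^ (-(finrank ℝ E : ℝ) / 2) :=
  (abs_heatKernelDeriv_le z ht).trans <|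
    mul_le_mul_of_nonneg_left (heatKernel_le z (by positivity)) (by positivity)

lemma norm_div_mul_heatKernel_le (z : E) {t : ℝ} (ht : 0 < t) :
    ‖z‖ / (2 * t) * heatKernel z t ≤ heatConst E / √t * heatKernel z (2 * t) := by
  have hG := heatKernel_pos z ht
  have hG2 : 0 < heatKernel z (2 * t) := heatKernel_pos z (by positivity)
  have hnorm : ‖z‖ / (2 * t) ≤ 1 / √t * (1 + ‖z‖ ^ 2 / (4 * t)) := by
    rw [show 1 / √t * (1 + ‖z‖ ^ 2 / (4 * t)) = (√t + (‖z‖ / 2) ^ 2 / √t) / t by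
      field_simp; rw [Real.sq_sqrt ht.le]; ring, ← div_div]
    gcongr
    have := two_mul_le_add_sq (√t) (‖z‖ / 2)
    have hst : 0 < √t := by positivity
    rw [← sub_nonneg, show √t + (‖z‖ / 2) ^ 2 / √t - ‖z‖ / 2 =
      (√t ^ 2 + (‖z‖ / 2) ^ 2 - √t * (‖z‖ / 2)) / √t by field_simp]
    exact div_nonneg (by nlinarith) hst.le
  calc ‖z‖ / (2 * t) * heatKernel z t
      ≤ 1 / √t * (1 + ‖z‖ ^ 2 / (4 * t)) * heatKernel z t := by gcongr
    _ = 1 / √t * ((1 + ‖z‖ ^ 2 / (4 * t)) * heatKernel z t) := by ring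
    _ ≤ 1 / √t * (2 * 2 ^ ((finrank ℝ E : ℝ) / 2) * heatKernel z (2 * t)) := by
        exact mul_le_mul_of_nonneg_left (one_add_mul_heatKernel_le z ht) (by positivity)
    _ ≤ heatConst E / √t * heatKernel z (2 * t) := by
        rw [← mul_assoc, one_div_mul_eq_div, coe_heatConst]
        gcongr
        have : (0 : ℝ) ≤ finrank ℝ E := by positivity
        linarith

lemma norm_deriv_heatKernel_add_smul_le (y h : E) (θ : ℝ) {t : ℝ} (ht : 0 < t) :
    ‖deriv (fun θ : ℝ => heatKernel (y + θ • h) t) θ‖ ≤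
      heatConst E * (‖h‖ / √t) * heatKernel (y + θ • h) (2 * t) := by
  set w : E := y + θ • h
  have hpath : HasDerivAt (fun θ : ℝ => y + θ • h) h θ := by
    simpa using ((hasDerivAt_id' θ).smul_const h).const_add y
  have hderiv : HasDerivAt (fun θ : ℝ => heatKernel (y + θ • h) t)
      (-(inner ℝ w h / (2 * t)) * heatKernel w t) θ := by
    have hexponent : HasDerivAt (fun θ : ℝ => -‖y + θ • h‖ ^ 2 / (4 * t))
        (-(2 * inner ℝ w h) / (4 * t)) θ := hpath.norm_sq.neg.div_const (4 * t)
    convert! hexponent.exp.const_mul ((4 * π * t) ^ (-(finrank ℝ E : ℝ) / 2)) using 1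
    unfold heatKernel
    field_simp
    ring
  have hG := heatKernel_pos w ht
  calc ‖deriv (fun θ : ℝ => heatKernel (y + θ • h) t) θ‖
      = |inner ℝ w h| / (2 * t) * heatKernel w t := by
        rw [hderiv.deriv, norm_mul, norm_neg, norm_div, Real.norm_eq_abs, Real.norm_eq_abs,
          Real.norm_eq_abs, abs_of_pos hG, abs_of_pos (by positivity : 0 < 2 * t)]
    _ ≤ ‖w‖ * ‖h‖ / (2 * t) * heatKernel w t := by
        gcongr; exact abs_real_inner_le_norm w h
    _ = ‖h‖ * (‖w‖ / (2 * t) * heatKernel w t) := by ring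
    _ ≤ ‖h‖ * (heatConst E / √t * heatKernel w (2 * t)) :=
        mul_le_mul_of_nonneg_left (norm_div_mul_heatKernel_le w ht) (norm_nonneg h)
    _ = heatConst E * (‖h‖ / √t) * heatKernel w (2 * t) := by ring

lemma enorm_heatKernel_add_sub_le (y h : E) {t : ℝ} (ht : 0 < t) :
    ‖heatKernel (y + h) t - heatKernel y t‖ₑ ≤ heatConst E * ENNReal.ofReal (‖h‖ / √t) *
      ∫⁻ θ in Icc (0 : ℝ) 1, ‖heatKernel (y + θ • h) (2 * t)‖ₑ := by
  have hsmooth : ContDiff ℝ 1 fun θ : ℝ => heatKernel (y + θ • h) t :=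
    contDiff_const.mul ((ContDiff.norm_sq ℝ (by fun_prop)).neg.div_const _).exp
  have hftc := enorm_sub_le_lintegral_deriv_of_contDiffOn_Icc hsmooth.contDiffOn zero_le_one
  rw [one_smul, zero_smul, add_zero] at hftc
  rw [← lintegral_const_mul' _ _ (by finiteness)]
  refine hftc.trans (lintegral_mono fun θ => ?_)
  rw [← ofReal_norm, enorm_heatKernel _ (by positivity), ← ENNReal.ofReal_coe_nnreal,
    ← ENNReal.ofReal_mul (by positivity), ← ENNReal.ofReal_mul (by positivity)]
  exact ENNReal.ofReal_le_ofReal (norm_deriv_heatKernel_add_smul_le y h θ ht)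

lemma exists_lintegral_rpow_mul_heatKernel_eq {a : ℝ} (ha : 0 < a) :
    ∃ C : ℝ≥0, ∀ z : E, z ≠ 0 →
      ∫⁻ t in Ioi 0, ENNReal.ofReal (t ^ (-a - 1)) * ‖heatKernel z (2 * t)‖ₑ =
        C * ENNReal.ofReal (‖z‖ ^ (finrank ℝ E + 2 * a))⁻¹ := by
  set b : ℝ := a + (finrank ℝ E : ℝ) / 2 with hb_def
  have hb : 0 < b := by positivity
  set A : ℝ := (8 * π) ^ (-(finrank ℝ E : ℝ) / 2) with hA_def
  refine ⟨(A * (8 ^ b * Real.Gamma b)).toNNReal, fun z hz => ?_⟩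
  have hz0 : 0 < ‖z‖ := norm_pos_iff.2 hz
  have hint : ∀ t ∈ Ioi (0 : ℝ), ENNReal.ofReal (t ^ (-a - 1)) * ‖heatKernel z (2 * t)‖ₑ =
      ENNReal.ofReal A * ENNReal.ofReal (t ^ (-b - 1) * Real.exp (-(‖z‖ ^ 2 / 8 / t))) := by
    intro t (ht : 0 < t)
    rw [enorm_heatKernel _ (by positivity), ← ENNReal.ofReal_mul (by positivity),
      ← ENNReal.ofReal_mul (by positivity), heatKernel, show 4 * π * (2 * t) = 8 * π * t by ring,
      Real.mul_rpow (by positivity) ht.le, show -b - 1 = (-a - 1) + -(finrank ℝ E : ℝ) / 2 by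
      rw [hb_def]; ring, Real.rpow_add ht, hA_def]
    ring_nf
  have hpow : (1 / (‖z‖ ^ 2 / 8)) ^ b = 8 ^ b * (‖z‖ ^ (finrank ℝ E + 2 * a))⁻¹ := by
    rw [one_div_div, Real.div_rpow (by positivity) (by positivity), div_eq_mul_inv,
      ← Real.rpow_natCast_mul hz0.le, hb_def]
    ring_nf
  rw [setLIntegral_congr_fun measurableSet_Ioi hint, lintegral_const_mul' _ _ ENNReal.ofReal_ne_top,
    lintegral_rpow_mul_exp_neg_div_Ioi hb (by positivity), hpow,
    ← ENNReal.ofReal_mul (by positivity), ENNReal.ofNNReal_toNNReal, ← ENNReal.ofReal_mul]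
  · ring_nf
  · have := Real.Gamma_pos_of_pos hb
    positivity

variable [MeasurableSpace E] [BorelSpace E]

@[fun_prop]
lemma measurable_heatKernel {α : Type*} [MeasurableSpace α] {z : α → E} {t : α → ℝ}
    (hz : Measurable z) (ht : Measurable t) : Measurable fun a => heatKernel (z a) (t a) := by
  unfold heatKernel; fun_prop

@[fun_prop]
lemma measurable_heatKernelDeriv {α : Type*} [MeasurableSpace α] {z : α → E} {t : α → ℝ}
    (hz : Measurable z) (ht : Measurable t) :
    Measurable fun a => heatKernelDeriv (z a) (t a) := by
  unfold heatKernelDeriv; fun_prop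

variable [FiniteDimensional ℝ E]

lemma integral_heatKernel {t : ℝ} (ht : 0 < t) : ∫ z : E, heatKernel z t = 1 := by
  have hgauss : ∫ z : E, Real.exp (-‖z‖ ^ 2 / (4 * t)) =
      (4 * π * t) ^ ((finrank ℝ E : ℝ) / 2) := by
    rw [show 4 * π * t = π / (1 / (4 * t)) by field_simp,
      ← GaussianFourier.integral_rexp_neg_mul_sq_norm (V := E) (by positivity)]
    congr with z
    ring_nf
  unfold heatKernel
  rw [integral_const_mul, hgauss, ← Real.rpow_add (by positivity), neg_div, neg_add_cancel,
    Real.rpow_zero]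

lemma integrable_heatKernel {t : ℝ} (ht : 0 < t) : Integrable fun z : E => heatKernel z t :=
  .of_integral_ne_zero (by rw [integral_heatKernel ht]; exact one_ne_zero)

lemma lintegral_enorm_heatKernel {t : ℝ} (ht : 0 < t) : ∫⁻ z : E, ‖heatKernel z t‖ₑ = 1 := by
  simp_rw [enorm_heatKernel _ ht]
  rw [← ofReal_integral_eq_lintegral_ofReal (integrable_heatKernel ht)
    (.of_forall fun z => (heatKernel_pos z ht).le), integral_heatKernel ht, ENNReal.ofReal_one]

lemma integral_heatKernel_mul_heatKernel_sub {t σ : ℝ} (ht : 0 < t) (hσ : 0 < σ) (x : E) :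
    ∫ y, heatKernel (x - y) σ * heatKernel y t = heatKernel x (t + σ) := by
  have hpow : (4 * π * t) ^ (-(finrank ℝ E : ℝ) / 2) * (4 * π * σ) ^ (-(finrank ℝ E : ℝ) / 2) =
      (4 * π * (t + σ)) ^ (-(finrank ℝ E : ℝ) / 2) *
        (4 * π * (t * σ / (t + σ))) ^ (-(finrank ℝ E : ℝ) / 2) := by
    rw [← Real.mul_rpow (by positivity) (by positivity),
      ← Real.mul_rpow (by positivity) (by positivity)]
    congr 1
    field_simp
  have hexp (y : E) : Real.exp (-‖y‖ ^ 2 / (4 * t)) * Real.exp (-‖x - y‖ ^ 2 / (4 * σ)) =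
      Real.exp (-‖x‖ ^ 2 / (4 * (t + σ))) *
        Real.exp (-‖y - (t / (t + σ)) • x‖ ^ 2 / (4 * (t * σ / (t + σ)))) := by
    rw [← Real.exp_add, ← Real.exp_add]
    congr 1
    rw [norm_sub_sq_real, norm_sub_sq_real, inner_smul_right, norm_smul, mul_pow,
      real_inner_comm y x, Real.norm_eq_abs, sq_abs]
    field_simp
    ring
  have hsquare (y : E) : heatKernel (x - y) σ * heatKernel y t =
      heatKernel x (t + σ) * heatKernel (y - (t / (t + σ)) • x) (t * σ / (t + σ)) := by
    unfold heatKernel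
    linear_combination (Real.exp (-‖y‖ ^ 2 / (4 * t)) * Real.exp (-‖x - y‖ ^ 2 / (4 * σ))) * hpow +
      ((4 * π * (t + σ)) ^ (-(finrank ℝ E : ℝ) / 2) *
        (4 * π * (t * σ / (t + σ))) ^ (-(finrank ℝ E : ℝ) / 2)) * hexp y
  simp_rw [hsquare]
  rw [integral_const_mul, integral_sub_right_eq_self fun y => heatKernel y (t * σ / (t + σ)),
    integral_heatKernel (by positivity), mul_one]

lemma lintegral_enorm_heatKernel_add_sub_le (h : E) {t : ℝ} (ht : 0 < t) :
    ∫⁻ y, ‖heatKernel (y + h) t - heatKernel y t‖ₑ ≤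
      heatConst E * ENNReal.ofReal (min 1 (‖h‖ / √t)) := by
  rcases le_total 1 (‖h‖ / √t) with hlarge | hsmall
  · calc ∫⁻ y, ‖heatKernel (y + h) t - heatKernel y t‖ₑ
        ≤ ∫⁻ y, (‖heatKernel (y + h) t‖ₑ + ‖heatKernel y t‖ₑ) :=
          lintegral_mono fun y => enorm_sub_le
      _ = 2 := by
          rw [lintegral_add_right _ (by fun_prop),
            lintegral_add_right_eq_self (fun y : E => ‖heatKernel y t‖ₑ),
            lintegral_enorm_heatKernel ht, one_add_one_eq_two]
      _ ≤ heatConst E * ENNReal.ofReal (min 1 (‖h‖ / √t)) := by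
          rw [min_eq_left hlarge, ENNReal.ofReal_one, mul_one]
          exact_mod_cast two_le_heatConst (E := E)
  · calc ∫⁻ y, ‖heatKernel (y + h) t - heatKernel y t‖ₑ
        ≤ ∫⁻ y, heatConst E * ENNReal.ofReal (‖h‖ / √t) *
            ∫⁻ θ in Icc (0 : ℝ) 1, ‖heatKernel (y + θ • h) (2 * t)‖ₑ :=
          lintegral_mono fun y => enorm_heatKernel_add_sub_le y h ht
      _ = heatConst E * ENNReal.ofReal (‖h‖ / √t) *
            ∫⁻ θ in Icc (0 : ℝ) 1, ∫⁻ y, ‖heatKernel (y + θ • h) (2 * t)‖ₑ := by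
          rw [lintegral_const_mul' _ _ (by finiteness), lintegral_lintegral_swap (by fun_prop)]
      _ = heatConst E * ENNReal.ofReal (min 1 (‖h‖ / √t)) := by
          simp_rw [lintegral_add_right_eq_self (fun y : E => ‖heatKernel y (2 * t)‖ₑ),
            lintegral_enorm_heatKernel (E := E) (show 0 < 2 * t by positivity)]
          simp [min_eq_right hsmall]

end Kernel

section Potential

variable {E : Type*} [NormedAddCommGroup E] [InnerProductSpace ℝ E] [MeasurableSpace E]
  [BorelSpace E] [FiniteDimensional ℝ E] {η : E → ℝ}

/-- The heat potential `ℍ[η]` of `η`. -/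
def heatPotential (η : E → ℝ) (x : E) (t : ℝ) : ℝ := ∫ y, heatKernel (x - y) t * η y

/-- The time derivative `∂ₜℍ[η]`, obtained by differentiating the kernel. -/
def heatPotentialDeriv (η : E → ℝ) (x : E) (t : ℝ) : ℝ := ∫ y, heatKernelDeriv (x - y) t * η y

-- Stated so as to cover `η = 1`, from which the kernel derivative is seen to have mean zero.
lemma integrable_and_hasDerivAt_heatPotential {x : E}
    (hη : ∀ τ, 0 < τ → Integrable fun y => heatKernel (x - y) τ * η y) {t : ℝ} (ht : 0 < t) :
    Integrable (fun y => heatKernelDeriv (x - y) t * η y) ∧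
      HasDerivAt (heatPotential η x) (heatPotentialDeriv η x t) t := by
  have hnhds : Ioo (t / 2) (2 * t) ∈ 𝓝 t := Ioo_mem_nhds (by linarith) (by linarith)
  refine hasDerivAt_integral_of_dominated_loc_of_deriv_le
    (F := fun τ y => heatKernel (x - y) τ * η y) (F' := fun τ y => heatKernelDeriv (x - y) τ * η y)
    (bound := fun y => heatConst E / (t / 2) *
      ((4 * t / t) ^ ((finrank ℝ E : ℝ) / 2) * ‖heatKernel (x - y) (4 * t) * η y‖)) hnhds ?_
    (hη t ht) ?_ (.of_forall fun y τ hτ => ?_)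
    (((hη _ (by positivity)).norm.const_mul _).const_mul _)
    (.of_forall fun y τ hτ => (hasDerivAt_heatKernel _ (by linarith [hτ.1])).mul_const _)
  · filter_upwards [Ioi_mem_nhds ht] with τ hτ using (hη τ hτ).aestronglyMeasurable
  · simp_rw [heatKernelDeriv, mul_assoc]
    exact Continuous.aestronglyMeasurable (by fun_prop) |>.mul (hη t ht).aestronglyMeasurable
  · have hτ0 : 0 < τ := by linarith [hτ.1]
    have hG : 0 < heatKernel (x - y) (4 * t) := heatKernel_pos _ (by positivity)
    rw [norm_mul, norm_mul, Real.norm_of_nonneg hG.le, ← mul_assoc, ← mul_assoc]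
    gcongr
    calc ‖heatKernelDeriv (x - y) τ‖
        ≤ heatConst E / τ * heatKernel (x - y) (2 * τ) := abs_heatKernelDeriv_le _ hτ0
      _ ≤ heatConst E / (t / 2) *
            ((4 * t / t) ^ ((finrank ℝ E : ℝ) / 2) * heatKernel (x - y) (4 * t)) := by
          refine mul_le_mul ?_ ?_ (heatKernel_pos _ (by positivity)).le (by positivity)
          · gcongr; exact hτ.1.le
          · exact heatKernel_le_mul _ ht (by linarith [hτ.1]) (by linarith [hτ.2])
      _ = _ := (mul_assoc _ _ _).symm

lemma integrable_heatKernel_sub_mul (hη : Integrable η) (x : E) {t : ℝ} (ht : 0 < t) :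
    Integrable fun y => heatKernel (x - y) t * η y :=
  hη.bdd_mul (Continuous.aestronglyMeasurable (by fun_prop)) <| .of_forall fun y => by
    rw [Real.norm_of_nonneg (heatKernel_pos _ ht).le]
    exact heatKernel_le _ ht

lemma integrable_heatKernelDeriv_sub_mul (hη : Integrable η) (x : E) {t : ℝ} (ht : 0 < t) :
    Integrable fun y => heatKernelDeriv (x - y) t * η y :=
  (integrable_and_hasDerivAt_heatPotential
    (fun _ => integrable_heatKernel_sub_mul hη x) ht).1

lemma hasDerivAt_heatPotential (hη : Integrable η) (x : E) {t : ℝ} (ht : 0 < t) :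
    HasDerivAt (heatPotential η x) (heatPotentialDeriv η x t) t :=
  (integrable_and_hasDerivAt_heatPotential
    (fun _ => integrable_heatKernel_sub_mul hη x) ht).2

lemma integrable_heatKernelDeriv_sub (x : E) {t : ℝ} (ht : 0 < t) :
    Integrable fun y => heatKernelDeriv (x - y) t := by
  simpa using (integrable_and_hasDerivAt_heatPotential (η := fun _ => 1) (x := x)
    (fun τ hτ => by simpa using (integrable_heatKernel hτ).comp_sub_left x) ht).1

lemma integral_heatKernelDeriv_sub (x : E) {t : ℝ} (ht : 0 < t) :
    ∫ y, heatKernelDeriv (x - y) t = 0 := by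
  have hderiv := (integrable_and_hasDerivAt_heatPotential (η := fun _ => 1) (x := x)
    (fun τ hτ => by simpa using (integrable_heatKernel hτ).comp_sub_left x) ht).2
  have hone : heatPotential (fun _ => 1) x =ᶠ[𝓝 t] fun _ => 1 := by
    filter_upwards [Ioi_mem_nhds ht] with τ hτ
    simp_rw [heatPotential, mul_one]
    rw [integral_sub_left_eq_self fun y => heatKernel y τ, integral_heatKernel hτ]
  simpa [heatPotentialDeriv] using
    hderiv.unique ((hasDerivAt_const t (1 : ℝ)).congr_of_eventuallyEq hone)

lemma integral_heatKernelDeriv_mul_heatKernel_sub {t σ : ℝ} (ht : 0 < t) (hσ : 0 < σ) (x : E) :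
    ∫ y, heatKernelDeriv (x - y) σ * heatKernel y t = heatKernelDeriv x (t + σ) := by
  have hderiv := hasDerivAt_heatPotential (integrable_heatKernel ht) x hσ
  have hsemigroup : heatPotential (heatKernel · t) x =ᶠ[𝓝 σ] fun τ => heatKernel x (t + τ) := by
    filter_upwards [Ioi_mem_nhds hσ] with τ hτ using integral_heatKernel_mul_heatKernel_sub ht hτ x
  exact hderiv.unique <| ((hasDerivAt_heatKernel x (by positivity)).comp_const_add t σ
    ).congr_of_eventuallyEq hsemigroup

lemma norm_heatPotential_le (hη : Integrable η) (x : E) {t : ℝ} (ht : 0 < t) :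
    ‖heatPotential η x t‖ ≤ (4 * π * t) ^ (-(finrank ℝ E : ℝ) / 2) * ∫ y, ‖η y‖ := by
  rw [← integral_const_mul]
  refine norm_integral_le_of_norm_le (hη.norm.const_mul _) (.of_forall fun y => ?_)
  rw [norm_mul, Real.norm_of_nonneg (heatKernel_pos _ ht).le]
  exact mul_le_mul_of_nonneg_right (heatKernel_le _ ht) (norm_nonneg _)

lemma norm_heatPotentialDeriv_le (hη : Integrable η) (x : E) {t : ℝ} (ht : 0 < t) :
    ‖heatPotentialDeriv η x t‖ ≤
      heatConst E / t * (4 * π * (2 * t)) ^ (-(finrank ℝ E : ℝ) / 2) * ∫ y, ‖η y‖ := by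
  rw [← integral_const_mul]
  refine norm_integral_le_of_norm_le (hη.norm.const_mul _) (.of_forall fun y => ?_)
  rw [norm_mul]
  exact mul_le_mul_of_nonneg_right (abs_heatKernelDeriv_le_const _ ht) (norm_nonneg _)

lemma measurable_heatPotentialDeriv {α : Type*} [MeasurableSpace α] {x : α → E} {t : α → ℝ}
    (hη : AEStronglyMeasurable η) (hx : Measurable x) (ht : Measurable t) :
    Measurable fun a => heatPotentialDeriv η (x a) (t a) := by
  have hmk (x : E) (t : ℝ) : heatPotentialDeriv η x t = heatPotentialDeriv (hη.mk η) x t := by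
    refine integral_congr_ae ?_
    filter_upwards [hη.ae_eq_mk] with y hy
    rw [hy]
  simp_rw [hmk]
  have : Measurable (hη.mk η) := hη.stronglyMeasurable_mk.measurable
  have hint : Measurable fun q : α × E => heatKernelDeriv (x q.1 - q.2) (t q.1) * hη.mk η q.2 := by
    fun_prop
  exact hint.stronglyMeasurable.integral_prod_right'.measurable

lemma heatPotentialDeriv_add (hη : Integrable η) (x : E) {t σ : ℝ} (ht : 0 < t) (hσ : 0 < σ) :
    heatPotentialDeriv η x (t + σ) = ∫ y, heatKernel y t * heatPotentialDeriv η (x - y) σ := by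
  have hint : Integrable fun q : E × E =>
      heatKernelDeriv (x - q.1 - q.2) σ * (η q.1 * heatKernel q.2 t) :=
    (hη.mul_prod (integrable_heatKernel ht)).bdd_mul
      (Continuous.aestronglyMeasurable (by fun_prop))
      (.of_forall fun q => abs_heatKernelDeriv_le_const _ hσ)
  calc heatPotentialDeriv η x (t + σ)
      = ∫ u, ∫ y, heatKernelDeriv (x - u - y) σ * (η u * heatKernel y t) := by
        refine integral_congr_ae (.of_forall fun u => ?_)
        dsimp only
        rw [← integral_heatKernelDeriv_mul_heatKernel_sub ht hσ, ← integral_mul_const]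
        congr with y
        ring
    _ = ∫ y, ∫ u, heatKernelDeriv (x - u - y) σ * (η u * heatKernel y t) :=
        integral_integral_swap hint
    _ = ∫ y, heatKernel y t * heatPotentialDeriv η (x - y) σ := by
        congr with y
        rw [heatPotentialDeriv, ← integral_const_mul]
        congr with u
        rw [sub_right_comm]
        ring

lemma heatPotentialDeriv_add_sub (hη : Integrable η) (x h : E) {σ : ℝ} (hσ : 0 < σ) :
    heatPotentialDeriv η (x + h) (2 * σ) - heatPotentialDeriv η x (2 * σ) =
      ∫ y, (heatKernel (y + h) σ - heatKernel y σ) * heatPotentialDeriv η (x - y) σ := by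
  have hmeas : AEStronglyMeasurable fun y => heatPotentialDeriv η (x - y) σ :=
    (measurable_heatPotentialDeriv hη.1 (by fun_prop) (by fun_prop)).aestronglyMeasurable
  have hint {f : E → ℝ} (hf : Integrable f) :
      Integrable fun y => f y * heatPotentialDeriv η (x - y) σ :=
    hf.mul_bdd hmeas (.of_forall fun y => norm_heatPotentialDeriv_le hη _ hσ)
  have hshift : heatPotentialDeriv η (x + h) (2 * σ) =
      ∫ y, heatKernel (y + h) σ * heatPotentialDeriv η (x - y) σ := by
    rw [two_mul, heatPotentialDeriv_add hη _ hσ hσ, ← integral_add_right_eq_self _ h]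
    simp_rw [add_sub_add_right_eq_sub]
  rw [hshift, two_mul, heatPotentialDeriv_add hη _ hσ hσ, ← integral_sub
    (hint ((integrable_heatKernel hσ).comp_add_right h)) (hint (integrable_heatKernel hσ))]
  simp_rw [sub_mul]

lemma tendsto_heatPotential_atTop [Nontrivial E] (hη : Integrable η) (x : E) :
    Tendsto (heatPotential η x) atTop (𝓝 0) := by
  have hdim : (0 : ℝ) < finrank ℝ E / 2 := by
    have := Module.finrank_pos (R := ℝ) (M := E)
    positivity
  have hbound : Tendsto (fun t : ℝ => (4 * π * t) ^ (-((finrank ℝ E : ℝ) / 2)) * ∫ y, ‖η y‖)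
      atTop (𝓝 (0 * ∫ y, ‖η y‖)) :=
    ((tendsto_rpow_neg_atTop hdim).comp
      (tendsto_id.const_mul_atTop (by positivity))).mul_const _
  rw [zero_mul] at hbound
  refine squeeze_zero_norm' ?_ hbound
  filter_upwards [Ioi_mem_atTop 0] with t ht
  rw [← neg_div]
  exact norm_heatPotential_le hη x ht

lemma tendsto_heatPotential_nhdsGT_zero (hη : Integrable η) {x : E} (hx : ContinuousAt η x) :
    Tendsto (heatPotential η x) (𝓝[>] 0) (𝓝 (η x)) := by
  have hpeak := tendsto_integral_comp_smul_smul_of_integrable'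
    (fun z => (heatKernel_pos z one_pos).le) (integral_heatKernel one_pos)
    (tendsto_norm_pow_mul_heatKernel_cobounded one_pos _) hη hx
  have hscale : Tendsto (fun t : ℝ => (√t)⁻¹) (𝓝[>] 0) atTop := by
    refine tendsto_inv_nhdsGT_zero.comp (tendsto_nhdsWithin_iff.2 ⟨?_, ?_⟩)
    · simpa using (Real.continuous_sqrt.tendsto 0).mono_left nhdsWithin_le_nhds
    · filter_upwards [self_mem_nhdsWithin] with t ht using Real.sqrt_pos.2 ht
  refine (hpeak.comp hscale).congr' ?_
  filter_upwards [self_mem_nhdsWithin] with t ht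
  simp_rw [heatPotential, heatKernel_eq_pow_mul _ ht]
  rfl

lemma enorm_add_sub_le_lintegral (hη : Integrable η) (hc : Continuous η) (x : E) {h : E}
    (hh : h ≠ 0) :
    ‖η (x + h) - η x‖ₑ ≤ 2 * ∫⁻ σ in Ioi (0 : ℝ),
      ‖heatPotentialDeriv η (x + h) (2 * σ) - heatPotentialDeriv η x (2 * σ)‖ₑ := by
  have : Nontrivial E := ⟨h, 0, hh⟩
  set F : ℝ → ℝ := fun σ => heatPotential η (x + h) (2 * σ) - heatPotential η x (2 * σ)
  set F' : ℝ → ℝ := fun σ =>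
    2 * (heatPotentialDeriv η (x + h) (2 * σ) - heatPotentialDeriv η x (2 * σ))
  have hderiv (σ : ℝ) (hσ : σ ∈ Ioi 0) : HasDerivAt F (F' σ) σ := by
    have h1 (z : E) : HasDerivAt (fun σ => heatPotential η z (2 * σ))
        (2 * heatPotentialDeriv η z (2 * σ)) σ :=
      ((hasDerivAt_heatPotential hη z (mul_pos two_pos hσ)).scomp σ
        ((hasDerivAt_id σ).const_mul 2)).congr_deriv (by simp)
    exact ((h1 (x + h)).sub (h1 x)).congr_deriv (mul_sub _ _ _).symm
  have hmeas : Measurable F' :=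
    ((measurable_heatPotentialDeriv hη.1 (by fun_prop) (by fun_prop)).sub
      (measurable_heatPotentialDeriv hη.1 (by fun_prop) (by fun_prop))).const_mul 2
  have hzero : Tendsto F (𝓝[>] 0) (𝓝 (η (x + h) - η x)) := by
    have hdouble : Tendsto (fun σ : ℝ => 2 * σ) (𝓝[>] 0) (𝓝[>] 0) :=
      tendsto_iff_comap.2 (comap_mulLeft_nhdsGT_zero two_pos).ge
    exact ((tendsto_heatPotential_nhdsGT_zero hη hc.continuousAt).comp hdouble).sub
      ((tendsto_heatPotential_nhdsGT_zero hη hc.continuousAt).comp hdouble)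
  have htop : Tendsto F atTop (𝓝 0) := by
    have hdouble : Tendsto (fun σ : ℝ => 2 * σ) atTop atTop :=
      tendsto_id.const_mul_atTop two_pos
    simpa using ((tendsto_heatPotential_atTop hη (x + h)).comp hdouble).sub
      ((tendsto_heatPotential_atTop hη x).comp hdouble)
  refine (enorm_le_lintegral_Ioi_of_hasDerivAt hderiv hmeas.aestronglyMeasurable hzero
    htop).trans_eq ?_
  rw [← lintegral_const_mul' _ _ (by finiteness)]
  simp_rw [F', enorm_mul, Real.enorm_of_nonneg zero_le_two, ENNReal.ofReal_ofNat]

end Potential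

section Energy

variable {E : Type*} [NormedAddCommGroup E] [InnerProductSpace ℝ E] [MeasurableSpace E]
  [BorelSpace E] [FiniteDimensional ℝ E] {η : E → ℝ} {s p : ℝ}

/-- The `p`-th power of the Aronszajn–Slobodeckij seminorm of `η`, with values in `[0, ∞]`. -/
def gagliardoEnergy (s p : ℝ) (η : E → ℝ) : ℝ≥0∞ :=
  ∫⁻ x, ∫⁻ y, ENNReal.ofReal (|η x - η y| ^ p / ‖x - y‖ ^ (finrank ℝ E + s * p))

/-- The `p`-th power of the `Lᵖ(dx dt/t)` norm of `t ^ (1 - s / 2) * ∂ₜℍ[η]`, with values in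
`[0, ∞]`. -/
def thermicEnergy (s p : ℝ) (η : E → ℝ) : ℝ≥0∞ :=
  ∫⁻ t in Ioi 0, ∫⁻ x, ENNReal.ofReal (|t ^ (1 - s / 2) * deriv (heatPotential η x) t| ^ p / t)

lemma gagliardoEnergy_eq_lintegral_enorm (hp : 0 ≤ p) (η : E → ℝ) :
    gagliardoEnergy s p η =
      ∫⁻ x, ∫⁻ y, ‖η x - η y‖ₑ ^ p * ENNReal.ofReal (‖x - y‖ ^ (finrank ℝ E + s * p))⁻¹ := by
  simp_rw [gagliardoEnergy, div_eq_mul_inv, Real.enorm_eq_ofReal_abs,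
    ENNReal.ofReal_rpow_of_nonneg (abs_nonneg _) hp,
    ← ENNReal.ofReal_mul (Real.rpow_nonneg (abs_nonneg _) p)]

lemma gagliardoEnergy_eq_lintegral_add_sub (hp : 0 ≤ p) (hη : Measurable η) :
    gagliardoEnergy s p η = ∫⁻ h, ENNReal.ofReal (‖h‖ ^ (finrank ℝ E + s * p))⁻¹ *
      ∫⁻ x, ‖η (x + h) - η x‖ₑ ^ p := by
  rw [gagliardoEnergy_eq_lintegral_enorm hp, lintegral_lintegral_swap (by fun_prop)]
  calc ∫⁻ y, ∫⁻ x, ‖η x - η y‖ₑ ^ p * ENNReal.ofReal (‖x - y‖ ^ (finrank ℝ E + s * p))⁻¹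
      = ∫⁻ y, ∫⁻ h, ‖η (y + h) - η y‖ₑ ^ p *
          ENNReal.ofReal (‖h‖ ^ (finrank ℝ E + s * p))⁻¹ := by
        refine lintegral_congr fun y => ?_
        rw [← lintegral_add_left_eq_self _ y]
        simp_rw [add_sub_cancel_left]
    _ = _ := by
        rw [lintegral_lintegral_swap (by fun_prop)]
        refine lintegral_congr fun h => ?_
        rw [lintegral_mul_const' _ _ ENNReal.ofReal_ne_top, mul_comm]

lemma thermicEnergy_eq (hp : 0 ≤ p) (hη : Integrable η) :
    thermicEnergy s p η = ∫⁻ t in Ioi 0, ENNReal.ofReal (t ^ ((1 - s / 2) * p - 1)) *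
      ∫⁻ x, ‖heatPotentialDeriv η x t‖ₑ ^ p := by
  refine setLIntegral_congr_fun measurableSet_Ioi fun t (ht : 0 < t) => ?_
  rw [← lintegral_const_mul' _ _ ENNReal.ofReal_ne_top]
  refine lintegral_congr fun x => ?_
  rw [(hasDerivAt_heatPotential hη x ht).deriv, abs_mul, abs_of_pos (by positivity),
    Real.mul_rpow (by positivity) (abs_nonneg _), mul_div_right_comm, ← Real.rpow_mul ht.le,
    ← Real.rpow_sub_one ht.ne', ENNReal.ofReal_mul (by positivity), Real.enorm_eq_ofReal_abs,
    ENNReal.ofReal_rpow_of_nonneg (abs_nonneg _) hp]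

lemma enorm_heatPotentialDeriv_rpow_le (hp : 1 ≤ p) (hη : Integrable η) (x : E) {t : ℝ}
    (ht : 0 < t) :
    ‖heatPotentialDeriv η x t‖ₑ ^ p ≤ ENNReal.ofReal (heatConst E / t) ^ p *
      ∫⁻ y, ‖heatKernel (x - y) (2 * t)‖ₑ * ‖η x - η y‖ₑ ^ p := by
  have hmass : ∫⁻ y, ‖heatKernel (x - y) (2 * t)‖ₑ = 1 := by
    rw [lintegral_sub_left_eq_self fun y => ‖heatKernel y (2 * t)‖ₑ,
      lintegral_enorm_heatKernel (by positivity)]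
  have hkernel (y : E) : ‖heatKernelDeriv (x - y) t‖ₑ ≤
      ENNReal.ofReal (heatConst E / t) * ‖heatKernel (x - y) (2 * t)‖ₑ := by
    rw [enorm_heatKernel _ (by positivity), ← ENNReal.ofReal_mul (by positivity),
      Real.enorm_eq_ofReal_abs]
    exact ENNReal.ofReal_le_ofReal (abs_heatKernelDeriv_le _ ht)
  have hcancel : heatPotentialDeriv η x t =
      -∫ y, heatKernelDeriv (x - y) t * (η x - η y) := by
    simp_rw [mul_sub]
    rw [integral_sub ((integrable_heatKernelDeriv_sub x ht).mul_const _)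
      (integrable_heatKernelDeriv_sub_mul hη x ht), integral_mul_const,
      integral_heatKernelDeriv_sub x ht, zero_mul, zero_sub, neg_neg, heatPotentialDeriv]
  have hp0 : 0 ≤ p := by positivity
  calc ‖heatPotentialDeriv η x t‖ₑ ^ p
      ≤ (∫⁻ y, ENNReal.ofReal (heatConst E / t) *
          (‖heatKernel (x - y) (2 * t)‖ₑ * ‖η x - η y‖ₑ)) ^ p := by
        rw [hcancel, enorm_neg]
        gcongr
        refine (enorm_integral_le_lintegral_enorm _).trans (lintegral_mono fun y => ?_)
        rw [enorm_mul, ← mul_assoc]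
        gcongr
        exact hkernel y
    _ = ENNReal.ofReal (heatConst E / t) ^ p *
          (∫⁻ y, ‖heatKernel (x - y) (2 * t)‖ₑ * ‖η x - η y‖ₑ) ^ p := by
        rw [lintegral_const_mul' _ _ ENNReal.ofReal_ne_top, ENNReal.mul_rpow_of_nonneg _ _ hp0]
    _ ≤ _ := by
        have hmeas : AEMeasurable fun y => ‖η x - η y‖ₑ :=
          (hη.aemeasurable.const_sub (η x)).enorm
        gcongr
        simpa only [hmass, ENNReal.one_rpow, one_mul] using
          lintegral_mul_rpow_le hp (k := fun y => ‖heatKernel (x - y) (2 * t)‖ₑ) (by fun_prop) hmeas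

lemma ofReal_rpow_mul_ofReal_div_rpow (hp : 0 ≤ p) (c : ℝ≥0) {t : ℝ} (ht : 0 < t) :
    ENNReal.ofReal (t ^ ((1 - s / 2) * p - 1)) * ENNReal.ofReal (c / t) ^ p =
      c ^ p * ENNReal.ofReal (t ^ (-(s * p / 2) - 1)) := by
  rw [ENNReal.ofReal_rpow_of_nonneg (by positivity) hp, Real.div_rpow (by positivity) ht.le,
    ← ENNReal.ofReal_mul (by positivity), mul_div_left_comm, ← Real.rpow_sub ht,
    ENNReal.ofReal_mul (by positivity), ← ENNReal.ofReal_rpow_of_nonneg (by positivity) hp,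
    ENNReal.ofReal_coe_nnreal]
  ring_nf

lemma thermicEnergy_le_lintegral (hp : 1 ≤ p) (hη : Integrable η) (hmeas : Measurable η) :
    thermicEnergy s p η ≤ heatConst E ^ p * ∫⁻ x, ∫⁻ y, ∫⁻ t in Ioi 0,
      ENNReal.ofReal (t ^ (-(s * p / 2) - 1)) *
        (‖heatKernel (x - y) (2 * t)‖ₑ * ‖η x - η y‖ₑ ^ p) := by
  have hp0 : 0 ≤ p := by positivity
  set J : ℝ → E → E → ℝ≥0∞ := fun t x y => ENNReal.ofReal (t ^ (-(s * p / 2) - 1)) *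
    (‖heatKernel (x - y) (2 * t)‖ₑ * ‖η x - η y‖ₑ ^ p)
  calc thermicEnergy s p η
      ≤ ∫⁻ t in Ioi 0, ∫⁻ x, heatConst E ^ p * ∫⁻ y, J t x y := by
        rw [thermicEnergy_eq hp0 hη]
        refine setLIntegral_mono' measurableSet_Ioi fun t (ht : 0 < t) => ?_
        rw [← lintegral_const_mul' _ _ ENNReal.ofReal_ne_top]
        refine lintegral_mono fun x => ?_
        rw [lintegral_const_mul' _ _ ENNReal.ofReal_ne_top, ← mul_assoc,
          ← ofReal_rpow_mul_ofReal_div_rpow hp0 _ ht, mul_assoc]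
        exact mul_le_mul_right (enorm_heatPotentialDeriv_rpow_le hp hη x ht) _
    _ = ∫⁻ x, ∫⁻ t in Ioi 0, heatConst E ^ p * ∫⁻ y, J t x y :=
        lintegral_lintegral_swap (by fun_prop)
    _ = heatConst E ^ p * ∫⁻ x, ∫⁻ y, ∫⁻ t in Ioi 0, J t x y := by
        rw [← lintegral_const_mul' _ _ (by finiteness)]
        refine lintegral_congr fun x => ?_
        rw [lintegral_const_mul' _ _ (by finiteness), lintegral_lintegral_swap (by fun_prop)]

theorem exists_thermicEnergy_le_gagliardoEnergy (hs : 0 < s) (hp : 1 ≤ p) :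
    ∃ C : ℝ≥0, ∀ η : E → ℝ, Integrable η → Measurable η →
      thermicEnergy s p η ≤ C * gagliardoEnergy s p η := by
  have hp0 : 0 < p := by positivity
  obtain ⟨C, hC⟩ := exists_lintegral_rpow_mul_heatKernel_eq (E := E)
    (a := s * p / 2) (by positivity)
  have htime (η : E → ℝ) (x y : E) :
      ∫⁻ t in Ioi 0, ENNReal.ofReal (t ^ (-(s * p / 2) - 1)) *
        (‖heatKernel (x - y) (2 * t)‖ₑ * ‖η x - η y‖ₑ ^ p) =
      C * (‖η x - η y‖ₑ ^ p * ENNReal.ofReal (‖x - y‖ ^ (finrank ℝ E + s * p))⁻¹) := by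
    rcases eq_or_ne x y with rfl | hxy
    · simp [hp0]
    · simp_rw [← mul_assoc]
      rw [lintegral_mul_const _ (by fun_prop), hC _ (sub_ne_zero.2 hxy),
        mul_div_cancel₀ _ two_ne_zero, mul_right_comm]
  refine ⟨heatConst E ^ p * C, fun η hη hmeas => ?_⟩
  refine (thermicEnergy_le_lintegral hp hη hmeas).trans_eq ?_
  simp_rw [htime, lintegral_const_mul' _ _ ENNReal.coe_ne_top]
  rw [← gagliardoEnergy_eq_lintegral_enorm hp0.le, ENNReal.coe_mul,
    ENNReal.coe_rpow_of_nonneg _ hp0.le, mul_assoc]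

lemma enorm_add_sub_le_lintegral_mul (hη : Integrable η) (hc : Continuous η) (x : E) {h : E}
    (hh : h ≠ 0) :
    ‖η (x + h) - η x‖ₑ ≤ 2 * ∫⁻ σ in Ioi (0 : ℝ), ∫⁻ y,
      ‖heatKernel (y + h) σ - heatKernel y σ‖ₑ * ‖heatPotentialDeriv η (x - y) σ‖ₑ := by
  refine (enorm_add_sub_le_lintegral hη hc x hh).trans ?_
  gcongr 2 * ?_
  refine setLIntegral_mono' measurableSet_Ioi fun σ hσ => ?_
  rw [heatPotentialDeriv_add_sub hη x h hσ]
  refine (enorm_integral_le_lintegral_enorm _).trans_eq ?_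
  simp_rw [enorm_mul]

lemma lintegral_rpow_mul_enorm_heatKernel_add_sub_le (hs0 : 0 < s) (hs1 : s < 1) {h : E}
    (hh : h ≠ 0) :
    ∫⁻ σ in Ioi 0, ∫⁻ y,
        ENNReal.ofReal (σ ^ (s / 2 - 1)) * ‖heatKernel (y + h) σ - heatKernel y σ‖ₑ ≤
      heatConst E * ENNReal.ofReal ((2 / s + 2 / (1 - s)) * ‖h‖ ^ s) := by
  rw [← lintegral_rpow_mul_min_div_sqrt hs0 hs1 (norm_pos_iff.2 hh),
    ← lintegral_const_mul' _ _ ENNReal.coe_ne_top]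
  refine setLIntegral_mono' measurableSet_Ioi fun σ (hσ : 0 < σ) => ?_
  rw [lintegral_const_mul' _ _ ENNReal.ofReal_ne_top, ENNReal.ofReal_mul (by positivity),
    mul_left_comm]
  gcongr
  exact lintegral_enorm_heatKernel_add_sub_le h hσ

lemma enorm_add_sub_rpow_le (hs0 : 0 < s) (hs1 : s < 1) (hp : 1 ≤ p) (hη : Integrable η)
    (hc : Continuous η) (x : E) {h : E} (hh : h ≠ 0) :
    ‖η (x + h) - η x‖ₑ ^ p ≤
      2 ^ p * (heatConst E * ENNReal.ofReal ((2 / s + 2 / (1 - s)) * ‖h‖ ^ s)) ^ (p - 1) *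
        ∫⁻ σ in Ioi 0, ∫⁻ y,
          ENNReal.ofReal (σ ^ (s / 2 - 1)) * ‖heatKernel (y + h) σ - heatKernel y σ‖ₑ *
          (ENNReal.ofReal (σ ^ (1 - s / 2)) * ‖heatPotentialDeriv η (x - y) σ‖ₑ) ^ p := by
  have hp0 : 0 ≤ p := by positivity
  have hmeas : Measurable fun q : ℝ × E => heatPotentialDeriv η (x - q.2) q.1 :=
    measurable_heatPotentialDeriv hη.1 (by fun_prop) (by fun_prop)
  have hsplit (σ : ℝ) (hσ : σ ∈ Ioi 0) :
      ∫⁻ y, ‖heatKernel (y + h) σ - heatKernel y σ‖ₑ * ‖heatPotentialDeriv η (x - y) σ‖ₑ =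
        ∫⁻ y, ENNReal.ofReal (σ ^ (s / 2 - 1)) * ‖heatKernel (y + h) σ - heatKernel y σ‖ₑ *
          (ENNReal.ofReal (σ ^ (1 - s / 2)) * ‖heatPotentialDeriv η (x - y) σ‖ₑ) := by
    refine lintegral_congr fun y => ?_
    rw [mul_mul_mul_comm, ← ENNReal.ofReal_mul (Real.rpow_nonneg (le_of_lt hσ) _),
      ← Real.rpow_add hσ, sub_add_sub_cancel', sub_self, Real.rpow_zero, ENNReal.ofReal_one,
      one_mul]
  calc ‖η (x + h) - η x‖ₑ ^ p
      ≤ (2 * ∫⁻ σ in Ioi 0, ∫⁻ y,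
          ENNReal.ofReal (σ ^ (s / 2 - 1)) * ‖heatKernel (y + h) σ - heatKernel y σ‖ₑ *
          (ENNReal.ofReal (σ ^ (1 - s / 2)) * ‖heatPotentialDeriv η (x - y) σ‖ₑ)) ^ p := by
        rw [← setLIntegral_congr_fun measurableSet_Ioi hsplit]
        gcongr
        exact enorm_add_sub_le_lintegral_mul hη hc x hh
    _ ≤ _ := by
        rw [ENNReal.mul_rpow_of_nonneg _ _ hp0, mul_assoc]
        gcongr
        refine (lintegral_lintegral_mul_rpow_le hp (by fun_prop) (by fun_prop)).trans ?_
        gcongr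
        exact lintegral_rpow_mul_enorm_heatKernel_add_sub_le hs0 hs1 hh

lemma lintegral_enorm_add_sub_rpow_le (hs0 : 0 < s) (hs1 : s < 1) (hp : 1 ≤ p)
    (hη : Integrable η) (hc : Continuous η) {h : E} (hh : h ≠ 0) :
    ∫⁻ x, ‖η (x + h) - η x‖ₑ ^ p ≤
      2 ^ p * (heatConst E * ENNReal.ofReal ((2 / s + 2 / (1 - s)) * ‖h‖ ^ s)) ^ (p - 1) *
        ∫⁻ σ in Ioi 0, ENNReal.ofReal (σ ^ (s / 2 - 1)) *
          (heatConst E * ENNReal.ofReal (min 1 (‖h‖ / √σ))) *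
          (ENNReal.ofReal (σ ^ (1 - s / 2)) ^ p * ∫⁻ x, ‖heatPotentialDeriv η x σ‖ₑ ^ p) := by
  have hp0 : 0 ≤ p := by positivity
  have hp1 : 0 ≤ p - 1 := sub_nonneg.2 hp
  have hmeas : Measurable fun q : ℝ × E => heatPotentialDeriv η q.2 q.1 :=
    measurable_heatPotentialDeriv hη.1 measurable_snd measurable_fst
  refine (lintegral_mono fun x => enorm_add_sub_rpow_le hs0 hs1 hp hη hc x hh).trans ?_
  rw [lintegral_const_mul' _ _ (by finiteness), lintegral_lintegral_lintegral_mul_sub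
    (k := fun σ y => ENNReal.ofReal (σ ^ (s / 2 - 1)) * ‖heatKernel (y + h) σ - heatKernel y σ‖ₑ)
    (f := fun σ x => (ENNReal.ofReal (σ ^ (1 - s / 2)) * ‖heatPotentialDeriv η x σ‖ₑ) ^ p)
    (by fun_prop) (by fun_prop)]
  refine mul_le_mul_right (setLIntegral_mono' measurableSet_Ioi fun σ (hσ : 0 < σ) => ?_) _
  simp_rw [ENNReal.mul_rpow_of_nonneg _ _ hp0]
  rw [lintegral_const_mul' _ _ ENNReal.ofReal_ne_top, lintegral_const_mul' _ _ (by finiteness)]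
  gcongr
  exact lintegral_enorm_heatKernel_add_sub_le h hσ

lemma ofReal_inv_mul_lintegral_enorm_add_sub_rpow_le (hs0 : 0 < s) (hs1 : s < 1) (hp : 1 ≤ p)
    (hη : Integrable η) (hc : Continuous η) (h : E) :
    ENNReal.ofReal (‖h‖ ^ (finrank ℝ E + s * p))⁻¹ * ∫⁻ x, ‖η (x + h) - η x‖ₑ ^ p ≤
      2 ^ p * heatConst E ^ p * ENNReal.ofReal (2 / s + 2 / (1 - s)) ^ (p - 1) *
        ∫⁻ σ in Ioi 0, ENNReal.ofReal (min 1 (‖h‖ / √σ) / ‖h‖ ^ (finrank ℝ E + s)) *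
          (ENNReal.ofReal (σ ^ (s / 2)) * (ENNReal.ofReal (σ ^ ((1 - s / 2) * p - 1)) *
            ∫⁻ x, ‖heatPotentialDeriv η x σ‖ₑ ^ p)) := by
  have hp0 : 0 ≤ p := by positivity
  have hp1 : 0 ≤ p - 1 := sub_nonneg.2 hp
  have hB : 0 ≤ 2 / s + 2 / (1 - s) := by
    have := sub_pos.2 hs1
    positivity
  rcases eq_or_ne h 0 with rfl | hh
  · have hexp : (finrank ℝ E + s * p : ℝ) ≠ 0 := by positivity
    simp [Real.zero_rpow hexp]
  have hr : 0 < ‖h‖ := norm_pos_iff.2 hh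
  have hspace (σ : ℝ) : ENNReal.ofReal (min 1 (‖h‖ / √σ) / ‖h‖ ^ (finrank ℝ E + s)) =
      ENNReal.ofReal (‖h‖ ^ (finrank ℝ E + s * p))⁻¹ * ENNReal.ofReal (‖h‖ ^ s) ^ (p - 1) *
        ENNReal.ofReal (min 1 (‖h‖ / √σ)) := by
    rw [ENNReal.ofReal_rpow_of_nonneg (by positivity) hp1, ← ENNReal.ofReal_mul (by positivity),
      ← ENNReal.ofReal_mul (by positivity), ← Real.rpow_neg hr.le, ← Real.rpow_mul hr.le,
      ← Real.rpow_add hr, div_eq_mul_inv, ← Real.rpow_neg hr.le, mul_comm]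
    ring_nf
  have htime {σ : ℝ} (hσ : 0 < σ) :
      ENNReal.ofReal (σ ^ (s / 2 - 1)) * ENNReal.ofReal (σ ^ (1 - s / 2)) ^ p =
        ENNReal.ofReal (σ ^ (s / 2)) * ENNReal.ofReal (σ ^ ((1 - s / 2) * p - 1)) := by
    rw [ENNReal.ofReal_rpow_of_nonneg (by positivity) hp0, ← ENNReal.ofReal_mul (by positivity),
      ← ENNReal.ofReal_mul (by positivity), ← Real.rpow_mul hσ.le, ← Real.rpow_add hσ,
      ← Real.rpow_add hσ]
    ring_nf
  have hconst : (heatConst E : ℝ≥0∞) ^ p = heatConst E ^ (p - 1) * heatConst E := by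
    simpa using ENNReal.rpow_add_of_nonneg (x := heatConst E) (p - 1) 1 hp1 zero_le_one
  refine (mul_le_mul_right
    (lintegral_enorm_add_sub_rpow_le hs0 hs1 hp hη hc hh) _).trans_eq ?_
  rw [← mul_assoc, ← lintegral_const_mul' _ _ (by finiteness),
    ← lintegral_const_mul' _ _ (by finiteness)]
  refine setLIntegral_congr_fun measurableSet_Ioi fun σ hσ => ?_
  rw [← mul_assoc (ENNReal.ofReal (σ ^ (s / 2))), ← htime hσ, hspace, hconst,
    ENNReal.ofReal_mul hB, ENNReal.mul_rpow_of_nonneg _ _ hp1, ENNReal.mul_rpow_of_nonneg _ _ hp1]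
  ring

theorem exists_gagliardoEnergy_le_thermicEnergy (hs0 : 0 < s) (hs1 : s < 1) (hp : 1 ≤ p) :
    ∃ C : ℝ≥0, ∀ η : E → ℝ, Integrable η → Continuous η →
      gagliardoEnergy s p η ≤ C * thermicEnergy s p η := by
  have hp0 : 0 ≤ p := by positivity
  have hp1 : 0 ≤ p - 1 := sub_nonneg.2 hp
  obtain ⟨C, hC⟩ := exists_lintegral_min_div_sqrt_mul_rpow_le (volume : Measure E) hs0 hs1
  obtain ⟨K, hK⟩ : ∃ K : ℝ≥0,
      2 ^ p * heatConst E ^ p * ENNReal.ofReal (2 / s + 2 / (1 - s)) ^ (p - 1) = K :=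
    ⟨_, (ENNReal.coe_toNNReal (by finiteness)).symm⟩
  refine ⟨K * C, fun η hη hc => ?_⟩
  have hmeas : Measurable fun q : E × ℝ => heatPotentialDeriv η q.1 q.2 :=
    measurable_heatPotentialDeriv hη.1 measurable_fst measurable_snd
  rw [gagliardoEnergy_eq_lintegral_add_sub hp0 hc.measurable, thermicEnergy_eq hp0 hη]
  refine (lintegral_mono fun h =>
    ofReal_inv_mul_lintegral_enorm_add_sub_rpow_le hs0 hs1 hp hη hc h).trans ?_
  rw [hK, lintegral_const_mul' _ _ ENNReal.coe_ne_top, ENNReal.coe_mul, mul_assoc,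
    ← lintegral_const_mul' (C : ℝ≥0∞) _ ENNReal.coe_ne_top, lintegral_lintegral_swap (by fun_prop)]
  refine mul_le_mul_right (setLIntegral_mono' measurableSet_Ioi fun σ hσ => ?_) _
  rw [lintegral_mul_const _ (by fun_prop), ← mul_assoc]
  exact mul_le_mul_left (hC σ hσ) _

theorem gagliardoEnergy_ne_top_of_lipschitzWith (hs0 : 0 < s) (hs1 : s < 1) (hp : 0 < p) {L : ℝ≥0}
    (hL : LipschitzWith L η) (hcs : HasCompactSupport η) : gagliardoEnergy s p η ≠ ∞ := by
  obtain ⟨B, hB⟩ := exists_enorm_add_sub_rpow_le_of_lipschitzWith hp.le hL hcs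
  obtain ⟨C, hC⟩ := exists_lintegral_min_div_rpow_le (volume : Measure E)
    (mul_pos hs0 hp) (mul_lt_of_lt_one_left hp hs1)
  have hfin : ∫⁻ h : E, ENNReal.ofReal (min 1 (‖h‖ ^ p) / ‖h‖ ^ (finrank ℝ E + s * p)) ≠ ∞ := by
    refine ne_top_of_le_ne_top ?_ (by simpa only [div_one] using hC 1 one_pos)
    finiteness
  have hsupp : volume (tsupport η) ≠ ∞ := hcs.measure_lt_top.ne
  rw [gagliardoEnergy_eq_lintegral_add_sub hp.le hL.continuous.measurable]
  refine ne_top_of_le_ne_top (b := B * (2 * volume (tsupport η)) *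
    ∫⁻ h : E, ENNReal.ofReal (min 1 (‖h‖ ^ p) / ‖h‖ ^ (finrank ℝ E + s * p))) (by finiteness) ?_
  rw [← lintegral_const_mul' _ _ (by finiteness)]
  refine lintegral_mono fun h => ?_
  refine (mul_le_mul_right (lintegral_enorm_add_sub_rpow_le_mul_measure_tsupport volume hp
    fun x => hB x h) _).trans_eq ?_
  rw [div_eq_mul_inv, ENNReal.ofReal_mul (by positivity)]
  ring

lemma integral_integral_eq_toReal_gagliardoEnergy (hη : Measurable η)
    (hfin : gagliardoEnergy s p η ≠ ∞) :
    ∫ x, ∫ y, |η x - η y| ^ p / ‖x - y‖ ^ (finrank ℝ E + s * p) =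
      (gagliardoEnergy s p η).toReal :=
  integral_integral_eq_toReal_lintegral_lintegral (by fun_prop)
    (.of_forall fun x y => by positivity) hfin

lemma integral_integral_eq_toReal_thermicEnergy (hη : Integrable η)
    (hfin : thermicEnergy s p η ≠ ∞) :
    ∫ t in Ioi 0, (∫ x, |t ^ (1 - s / 2) * deriv (heatPotential η x) t| ^ p) / t =
      (thermicEnergy s p η).toReal := by
  have hmeas : Measurable fun q : ℝ × E => heatPotentialDeriv η q.2 q.1 :=
    measurable_heatPotentialDeriv hη.1 measurable_snd measurable_fst
  have hderiv : (fun q : ℝ × E => |q.1 ^ (1 - s / 2) * heatPotentialDeriv η q.2 q.1| ^ p / q.1)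
      =ᵐ[(volume.restrict (Ioi 0)).prod volume]
      fun q => |q.1 ^ (1 - s / 2) * deriv (heatPotential η q.2) q.1| ^ p / q.1 := by
    filter_upwards [Measure.quasiMeasurePreserving_fst.ae (ae_restrict_mem measurableSet_Ioi)]
      with q (hq : 0 < q.1)
    rw [(hasDerivAt_heatPotential hη q.2 hq).deriv]
  simp_rw [← integral_div]
  refine integral_integral_eq_toReal_lintegral_lintegral (AEMeasurable.congr (by fun_prop) hderiv)
    ?_ hfin
  filter_upwards [ae_restrict_mem measurableSet_Ioi] with t (ht : 0 < t) x
  positivity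

end Energy

theorem stmt6_general {E : Type*} [NormedAddCommGroup E] [InnerProductSpace ℝ E]
    [FiniteDimensional ℝ E] [MeasurableSpace E] [BorelSpace E] {s p : ℝ} (hs0 : 0 < s)
    (hs1 : s < 1) (hp : 1 ≤ p) :
    ∃ C : ℝ, 0 < C ∧
      ∀ η : E → ℝ, Continuous η → Integrable η → gagliardoEnergy s p η ≠ ∞ →
        C⁻¹ * (∫ x, ∫ y, |η x - η y| ^ p / ‖x - y‖ ^ (finrank ℝ E + s * p)) ^ (1 / p) ≤
            (∫ t in Ioi 0,
              (∫ x, |t ^ (1 - s / 2) * deriv (heatPotential η x) t| ^ p) / t) ^ (1 / p) ∧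
          (∫ t in Ioi 0,
              (∫ x, |t ^ (1 - s / 2) * deriv (heatPotential η x) t| ^ p) / t) ^ (1 / p) ≤
            C * (∫ x, ∫ y, |η x - η y| ^ p / ‖x - y‖ ^ (finrank ℝ E + s * p)) ^ (1 / p) := by
  obtain ⟨C₁, hC₁⟩ := exists_gagliardoEnergy_le_thermicEnergy (E := E) hs0 hs1 hp
  obtain ⟨C₂, hC₂⟩ := exists_thermicEnergy_le_gagliardoEnergy (E := E) hs0 hp
  set C : ℝ≥0 := 1 + C₁ + C₂
  have : 0 < C := by positivity
  refine ⟨(C : ℝ) ^ (1 / p), by positivity, fun η hc hη hfin => ?_⟩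
  have hr : 0 ≤ 1 / p := by positivity
  have hlower : gagliardoEnergy s p η ≤ C * thermicEnergy s p η :=
    (hC₁ η hη hc).trans
      (mul_le_mul_left (ENNReal.coe_le_coe.2 (le_add_self.trans le_self_add)) _)
  have hupper : thermicEnergy s p η ≤ C * gagliardoEnergy s p η :=
    (hC₂ η hη hc.measurable).trans (mul_le_mul_left (ENNReal.coe_le_coe.2 le_add_self) _)
  have hfin' : thermicEnergy s p η ≠ ∞ :=
    ne_top_of_le_ne_top (ENNReal.mul_ne_top ENNReal.coe_ne_top hfin) hupper
  rw [integral_integral_eq_toReal_gagliardoEnergy hc.measurable hfin,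
    integral_integral_eq_toReal_thermicEnergy hη hfin', inv_mul_le_iff₀ (by positivity)]
  exact ⟨toReal_rpow_le_mul hr hfin' hlower, toReal_rpow_le_mul hr hfin hupper⟩

lemma heatPotential_eq_heatPot {N : ℕ} (η : Euc N → ℝ) : heatPotential η = heatPot N η := by
  ext x t
  simp only [heatPotential, heatKernel, heatPot, finrank_euclideanSpace_fin]

/-- Lemma 2.8: equivalence of the Gagliardo seminorm and its thermic description. -/
theorem stmt6 (N : ℕ) (s p : ℝ) (hs0 : 0 < s) (hs1 : s < 1) (hp : 1 < p) :
    ∃ C : ℝ, 0 < C ∧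
      ∀ η : Euc N → ℝ, ContDiff ℝ (⊤ : ℕ∞) η → HasCompactSupport η →
        C⁻¹ * (∫ x, ∫ y, |η x - η y| ^ p / ‖x - y‖ ^ ((N : ℝ) + s * p)) ^ (1 / p) ≤
            (∫ t in Set.Ioi (0 : ℝ),
              (∫ x, |t ^ (1 - s / 2) * deriv (fun τ => heatPot N η x τ) t| ^ p) / t) ^ (1 / p) ∧
          (∫ t in Set.Ioi (0 : ℝ),
              (∫ x, |t ^ (1 - s / 2) * deriv (fun τ => heatPot N η x τ) t| ^ p) / t) ^ (1 / p) ≤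
            C * (∫ x, ∫ y, |η x - η y| ^ p / ‖x - y‖ ^ ((N : ℝ) + s * p)) ^ (1 / p) := by
  obtain ⟨C, hC, hequiv⟩ := stmt6_general (E := Euc N) hs0 hs1 hp.le
  refine ⟨C, hC, fun η hη hcs => ?_⟩
  obtain ⟨L, hL⟩ := hη.lipschitzWith_of_hasCompactSupport hcs (by simp)
  simpa only [heatPotential_eq_heatPot, finrank_euclideanSpace_fin] using
    hequiv η hη.continuous (hη.continuous.integrable_of_hasCompactSupport hcs)
      (gagliardoEnergy_ne_top_of_lipschitzWith hs0 hs1 (by positivity) hL hcs)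

end
end
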